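/- In the Flat regime (n^{3/2}V(A(n))/k(n) → 0 and m(n)/(k(n)·n^{1/2}) → c for a fixed constant c > 0, with k(n)/√n → ∞), the total variation distance between the standard and planted balls-and-bins distributions satisfies TV_{A(n)}(m(n),n) → 2Φ(1/(2√2·c)) − 1 as n → ∞, where Φ is the standard normal cumulative distribution function. -/

import Mathlib

/-!
Let `L` be the likelihood ratio of the planted to the standard distribution, so that
`TV = ½ E|1 - L|` (`tvDist_eq`), and let `W` be the quadratic statistic `∑ z_i²`, centred and
normalised under the standard distribution (`Wst`). Put `σ = 1/(√2 c)`. In the Flat regime `L` is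
asymptotically the function `g(W)`, `g(w) = exp(-σ w - σ²/2)`, in the sense of `L²`, and `W` is
asymptotically standard normal. Hence the limit of `TV` is `½ ∫ |1 - g| dN(0,1)`, the total
variation distance between `N(0,1)` and `N(-σ,1)`, which is `2Φ(σ/2) - 1` (`gaussian_tv`).

The approximation of `L` by `g(W)` avoids expanding `L`. For a bounded continuous truncation `g_M`
of `g`, the change of measure `EE_LR` gives
`E (L - g_M(W))² = E L² - 2 E_PL g_M(W) + E g_M(W)²`, and three facts suffice:

* `W → N(0,1)` in law under the standard distribution (`clt_standard`);
* `W → N(-σ,1)` in law under the planted distribution (`clt_planted`);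
* `limsup E L² ≤ exp(σ²) = ∫ g² dN(0,1)` (`second_moment`).

The right-hand side then has limsup at most `exp(σ²) - 2 ∫ g_M dN(-σ,1) + ∫ g_M² dN(0,1)`, which
tends to `0` as `M → ∞` (`tendsto_gtr_planted`, `tendsto_gtr_sq`).

The first central limit theorem comes from a Stein identity: by size biasing (`stein_id`), the
characteristic function `φ` of `W` satisfies `φ' = -tφ` up to `O(n^{-1/2})` (`phiS_clt`). The second
one follows because a planted configuration `y + a` has
`∑ (y_i + a_i)² = ∑ y_i² + 2 ∑ a_i y_i + ∑ a_i²`, where after centring the cross term is negligible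
in the Flat regime and the remaining deterministic shift is `-σ` (`Wst_add`).

For the second moment, `E L²` is an explicit sum over the numbers of coincidences in each bin
between two copies of the planting (`EE_LR_sq`). A Poissonisation bound with the sharp constant
(`ratio_bound`) makes it factorise over bins, up to a Stirling factor tending to `1`
(`EE_LR_sq_le`). The factor of a bin has an expansion in Charlier coefficients
(`mehler`, `Gbin_eq`), whose terms of degrees one and two give the limit and whose tail is bounded
by `hc_bound`.
-/

open Finset Filter Topology

/-- Probability of configuration `z` of `m` balls in `n` bins under the standard
(uniform multinomial) distribution ST(m,n). -/
noncomputable def stProb (n m : ℕ) (z : Fin n → ℕ) : ℝ :=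
  if ∑ i, z i = m then
    ((Nat.factorial m : ℝ) / ∏ i, (Nat.factorial (z i) : ℝ)) * ((n : ℝ))⁻¹ ^ m
  else 0

/-- Probability of configuration `z` of `m` balls in `n` bins under the planted
distribution PL_A(m,n) with planting `a`. -/
noncomputable def plProb (n m : ℕ) (a : Fin n → ℕ) (z : Fin n → ℕ) : ℝ :=
  if (∑ i, z i = m) ∧ (∀ i, a i ≤ z i) then
    ((Nat.factorial (m - ∑ i, a i) : ℝ) / ∏ i, (Nat.factorial (z i - a i) : ℝ)) *
      ((n : ℝ))⁻¹ ^ (m - ∑ i, a i)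
  else 0

/-- Expectation of a statistic `T` with respect to a probability function `p` on
configurations. -/
noncomputable def expec {n : ℕ} (p : (Fin n → ℕ) → ℝ) (T : (Fin n → ℕ) → ℝ) : ℝ :=
  ∑' z : Fin n → ℕ, p z * T z

/-- Variance of a statistic `T` with respect to a probability function `p`. -/
noncomputable def varOf {n : ℕ} (p : (Fin n → ℕ) → ℝ) (T : (Fin n → ℕ) → ℝ) : ℝ :=
  ∑' z : Fin n → ℕ, p z * (T z - expec p T) ^ 2

/-- Probability of a set `s` of configurations with respect to a probability
function `p`. -/
noncomputable def probOf {n : ℕ} (p : (Fin n → ℕ) → ℝ) (s : Set (Fin n → ℕ)) : ℝ :=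
  ∑' z : Fin n → ℕ, Set.indicator s p z

/-- `V(A) = (Σ_i a_i²)/n − k²/n²` where `k = Σ_i a_i`. -/
noncomputable def plantV (n : ℕ) (a : Fin n → ℕ) : ℝ :=
  (∑ i, (a i : ℝ) ^ 2) / n - ((∑ i, (a i : ℝ)) / n) ^ 2

/-- `q_i = (n/m)(z_i − m/n)`. -/
noncomputable def qStat (n m : ℕ) (z : Fin n → ℕ) (i : Fin n) : ℝ :=
  ((n : ℝ) / m) * ((z i : ℝ) - (m : ℝ) / n)

/-- The Hilly-regime statistic `H_A(Z) = Σ_i a_i q_i`. -/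
noncomputable def HStat (n m : ℕ) (a : Fin n → ℕ) (z : Fin n → ℕ) : ℝ :=
  ∑ i, (a i : ℝ) * qStat n m z i

/-- The Flat-regime statistic `F_A(Z) = Σ_i a_i q_i²`. -/
noncomputable def FStat (n m : ℕ) (a : Fin n → ℕ) (z : Fin n → ℕ) : ℝ :=
  ∑ i, (a i : ℝ) * qStat n m z i ^ 2

/-- The Intermediate-regime statistic `I_A(Z) = Σ_i a_i q_i − (1/2) Σ_i a_i q_i²`. -/
noncomputable def IStat (n m : ℕ) (a : Fin n → ℕ) (z : Fin n → ℕ) : ℝ :=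
  HStat n m a z - (1/2) * FStat n m a z

/-- The standard normal cumulative distribution function `Φ`. -/
noncomputable def stdNormalCDF (x : ℝ) : ℝ :=
  ∫ t in Set.Iic x, Real.exp (-t ^ 2 / 2) / Real.sqrt (2 * Real.pi)

/-- Total variation distance `TV_A(m,n)` between ST(m,n) and PL_A(m,n). -/
noncomputable def tvDist (n m : ℕ) (a : Fin n → ℕ) : ℝ :=
  (1/2) * ∑' z : Fin n → ℕ, |stProb n m z - plProb n m a z|

/-- The Flat regime: `n^{3/2} V(A)/k → 0` and `m/(k n^{1/2}) → c`. -/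
def FlatRegime (A : (n : ℕ) → Fin n → ℕ) (m k : ℕ → ℕ) (c : ℝ) : Prop :=
  Tendsto (fun n : ℕ => (n : ℝ) ^ ((3 : ℝ)/2) * plantV n (A n) / (k n : ℝ)) atTop (𝓝 0) ∧
  Tendsto (fun n : ℕ => (m n : ℝ) / ((k n : ℝ) * Real.sqrt n)) atTop (𝓝 c)

/-- The Intermediate regime: `n^{3/2} V(A)/k → λ` and `m/(k n^{1/2}) → c`. -/
def IntermediateRegime (A : (n : ℕ) → Fin n → ℕ) (m k : ℕ → ℕ) (lam c : ℝ) : Prop :=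
  Tendsto (fun n : ℕ => (n : ℝ) ^ ((3 : ℝ)/2) * plantV n (A n) / (k n : ℝ)) atTop (𝓝 lam) ∧
  Tendsto (fun n : ℕ => (m n : ℝ) / ((k n : ℝ) * Real.sqrt n)) atTop (𝓝 c)

/-- The Hilly regime: `n^{3/2} V(A)/k → ∞` and `m/(V(A) n²) → c`. -/
def HillyRegime (A : (n : ℕ) → Fin n → ℕ) (m k : ℕ → ℕ) (c : ℝ) : Prop :=
  Tendsto (fun n : ℕ => (n : ℝ) ^ ((3 : ℝ)/2) * plantV n (A n) / (k n : ℝ)) atTop atTop ∧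
  Tendsto (fun n : ℕ => (m n : ℝ) / (plantV n (A n) * (n : ℝ) ^ 2)) atTop (𝓝 c)

/-- One of the three regimes holds (with its positive constants). -/
def SomeRegime (A : (n : ℕ) → Fin n → ℕ) (m k : ℕ → ℕ) : Prop :=
  (∃ c : ℝ, 0 < c ∧ FlatRegime A m k c) ∨
  (∃ lam c : ℝ, 0 < lam ∧ 0 < c ∧ IntermediateRegime A m k lam c) ∨
  (∃ c : ℝ, 0 < c ∧ HillyRegime A m k c)

/-! ### Expectations under the standard distribution -/

/-- Expectation of `F` over the configurations `z` of `m` balls in `n` bins under ST(m,n),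
written as a finite sum; `F` may take values in any real vector space. -/
noncomputable def EE {E : Type*} [AddCommGroup E] [Module ℝ E] (n m : ℕ)
    (F : (Fin n → ℕ) → E) : E :=
  ∑ z ∈ Finset.piAntidiag univ m, stProb n m z • F z

lemma mem_conf {n m : ℕ} {z : Fin n → ℕ} : z ∈ Finset.piAntidiag univ m ↔ ∑ i, z i = m := by
  simp

lemma stProb_eq {n m : ℕ} {z : Fin n → ℕ} (h : ∑ i, z i = m) : stProb n m z =
    ((Nat.factorial m : ℝ) / ∏ i, (Nat.factorial (z i) : ℝ)) * ((n : ℝ))⁻¹ ^ m := by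
  simp [stProb, h]

lemma stProb_zero {n m : ℕ} {z : Fin n → ℕ} (h : ∑ i, z i ≠ m) : stProb n m z = 0 := by
  simp [stProb, h]

lemma stProb_nonneg (n m : ℕ) (z : Fin n → ℕ) : 0 ≤ stProb n m z := by
  unfold stProb; split_ifs <;> positivity

lemma stProb_pos {n m : ℕ} (hn : 0 < n) {z : Fin n → ℕ} (h : ∑ i, z i = m) :
    0 < stProb n m z := by
  rw [stProb_eq h]
  have : (0 : ℝ) < n := by exact_mod_cast hn
  have h2 : (0 : ℝ) < ∏ i, (Nat.factorial (z i) : ℝ) :=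
    Finset.prod_pos fun i _ => by exact_mod_cast Nat.factorial_pos _
  positivity

lemma tsum_eq_sum_conf {n m : ℕ} (G : (Fin n → ℕ) → ℝ)
    (h : ∀ z, ∑ i, z i ≠ m → G z = 0) :
    ∑' z, G z = ∑ z ∈ Finset.piAntidiag univ m, G z := by
  refine tsum_eq_sum fun z hz => h z ?_
  rwa [mem_conf] at hz

/-- The product of falling factorials `∏ (z_i)_{b_i}`. -/
noncomputable def dfac {n : ℕ} (b z : Fin n → ℕ) : ℝ :=
  ∏ i, ((z i).descFactorial (b i) : ℝ)

lemma stProb_add {n m : ℕ} (hn : 0 < n) (b w : Fin n → ℕ) (hw : ∑ i, w i + ∑ i, b i = m) :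
    stProb n m (w + b) * dfac b (w + b) =
      ((m.descFactorial (∑ i, b i) : ℝ) * (n : ℝ)⁻¹ ^ (∑ i, b i)) *
        stProb n (m - ∑ i, b i) w := by
  have h1 : ∑ i, (w + b) i = m := by simpa [Finset.sum_add_distrib] using hw
  have h2 : ∑ i, w i = m - ∑ i, b i := by omega
  rw [stProb_eq h1, stProb_eq h2]
  have h3 : ∀ i, ((Nat.factorial ((w + b) i) : ℝ)) =
      (Nat.factorial (w i) : ℝ) * (((w + b) i).descFactorial (b i) : ℝ) := by
    intro i
    have := Nat.factorial_mul_descFactorial (n := (w + b) i) (k := b i) (by simp)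
    rw [← this]; push_cast; simp
  have h4 : (m.factorial : ℝ) = ((m - ∑ i, b i).factorial : ℝ) *
      (m.descFactorial (∑ i, b i) : ℝ) := by
    exact_mod_cast (Nat.factorial_mul_descFactorial (n := m) (k := ∑ i, b i) (by omega)).symm
  have h5 : ∏ i, (Nat.factorial ((w + b) i) : ℝ) =
      (∏ i, (Nat.factorial (w i) : ℝ)) * dfac b (w + b) := by
    rw [dfac, ← Finset.prod_mul_distrib]
    exact Finset.prod_congr rfl fun i _ => h3 i
  have h6 : (∏ i, (Nat.factorial (w i) : ℝ)) ≠ 0 :=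
    Finset.prod_ne_zero_iff.2 fun i _ => by exact_mod_cast Nat.factorial_ne_zero _
  have h7 : dfac b (w + b) ≠ 0 := by
    refine Finset.prod_ne_zero_iff.2 fun i _ => ?_
    have : (w + b) i ≥ b i := by simp
    exact_mod_cast (Nat.descFactorial_pos.2 this).ne'
  have h8 : (n : ℝ)⁻¹ ^ m = (n : ℝ)⁻¹ ^ (∑ i, b i) * (n : ℝ)⁻¹ ^ (m - ∑ i, b i) := by
    rw [← pow_add]; congr 1; omega
  rw [h5, h4, h8]
  field_simp

section
variable {E : Type*} [AddCommGroup E] [Module ℝ E]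

/-- Factorial tilting: weighting ST(m,n) by `∏ (z_i)_{b_i}` yields a multiple of the law of
`w + b` with `w ∼ ST(m - |b|, n)`. All moment identities are instances of this one. -/
lemma EE_shift {n m : ℕ} (hn : 0 < n) (b : Fin n → ℕ) (hb : ∑ i, b i ≤ m)
    (F : (Fin n → ℕ) → E) :
    EE n m (fun z => dfac b z • F z) =
      ((m.descFactorial (∑ i, b i) : ℝ) * (n : ℝ)⁻¹ ^ (∑ i, b i)) •
        EE n (m - ∑ i, b i) (fun w => F (w + b)) := by
  classical
  unfold EE
  rw [Finset.smul_sum]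
  have hsub : (Finset.piAntidiag univ (m - ∑ i, b i)).map (addRightEmbedding b) ⊆
      Finset.piAntidiag univ m := by
    intro z hz
    obtain ⟨w, hw, rfl⟩ := Finset.mem_map.1 hz
    rw [mem_conf] at *
    simp [Finset.sum_add_distrib, hw]
    omega
  rw [← Finset.sum_subset hsub]
  · rw [Finset.sum_map]
    refine Finset.sum_congr rfl fun w hw => ?_
    rw [mem_conf] at hw
    simp only [addRightEmbedding_apply]
    rw [smul_smul, smul_smul, stProb_add hn b w (by omega)]
  · intro z hz hz2
    have : ∃ i, z i < b i := by
      by_contra! hcon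
      apply hz2
      rw [Finset.mem_map]
      refine ⟨z - b, ?_, ?_⟩
      · rw [mem_conf] at *
        simp only [Pi.sub_apply]
        rw [Finset.sum_tsub_distrib _ (fun i _ => hcon i), hz]
      · ext i; simp [hcon i]
    obtain ⟨i, hi⟩ := this
    have : dfac b z = 0 := by
      refine Finset.prod_eq_zero (Finset.mem_univ i) ?_
      exact_mod_cast Nat.descFactorial_eq_zero_iff_lt.2 hi
    simp [this]

lemma EE_add (n m : ℕ) (F G : (Fin n → ℕ) → E) :
    EE n m (fun z => F z + G z) = EE n m F + EE n m G := by
  simp [EE, smul_add, Finset.sum_add_distrib]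

lemma EE_sub (n m : ℕ) (F G : (Fin n → ℕ) → E) :
    EE n m (fun z => F z - G z) = EE n m F - EE n m G := by
  simp [EE, smul_sub, Finset.sum_sub_distrib]

lemma EE_smul (n m : ℕ) (c : ℝ) (F : (Fin n → ℕ) → E) :
    EE n m (fun z => c • F z) = c • EE n m F := by
  simp only [EE, Finset.smul_sum]
  exact Finset.sum_congr rfl fun z _ => smul_comm _ _ _

lemma EE_sum {ι : Type*} (s : Finset ι) (n m : ℕ) (F : ι → (Fin n → ℕ) → E) :
    EE n m (fun z => ∑ i ∈ s, F i z) = ∑ i ∈ s, EE n m (F i) := by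
  simp only [EE, Finset.smul_sum]
  exact Finset.sum_comm

lemma EE_congr {n m : ℕ} {F G : (Fin n → ℕ) → E} (h : ∀ z, ∑ i, z i = m → F z = G z) :
    EE n m F = EE n m G := by
  refine Finset.sum_congr rfl fun z hz => ?_
  rw [h z (mem_conf.1 hz)]

/-- Size biasing: `E_{m+1}[z_i F(z)] = ((m+1)/n) E_m[F(w + e_i)]`. -/
lemma EE_size_bias {n : ℕ} (hn : 0 < n) (m : ℕ) (i : Fin n) (F : (Fin n → ℕ) → E) :
    EE n (m + 1) (fun z => (z i : ℝ) • F z) =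
      (((m + 1 : ℕ) : ℝ) / n) • EE n m (fun w => F (w + Pi.single i 1)) := by
  have hs : ∑ j, (Pi.single i 1 : Fin n → ℕ) j = 1 := by simp
  have h := EE_shift hn (m := m + 1) (Pi.single i 1) (by rw [hs]; omega) F
  have hd : ∀ z : Fin n → ℕ, dfac (Pi.single i 1) z = (z i : ℝ) := by
    intro z
    unfold dfac
    rw [Finset.prod_eq_single i]
    · simp
    · intro j _ hj; simp [hj]
    · simp
  simp only [hd] at h
  rw [hs] at h
  rw [h]
  simp [div_eq_mul_inv]

/-- One-step recursion: the last of the `m+1` balls falls into a uniform bin. -/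
lemma EE_succ {n : ℕ} (hn : 0 < n) (m : ℕ) (F : (Fin n → ℕ) → E) :
    EE n (m + 1) F = (n : ℝ)⁻¹ • ∑ i, EE n m (fun w => F (w + Pi.single i 1)) := by
  have h1 : ((m + 1 : ℕ) : ℝ) • EE n (m + 1) F =
      ∑ i, EE n (m + 1) (fun z => (z i : ℝ) • F z) := by
    rw [← EE_sum, ← EE_smul]
    refine EE_congr fun z hz => ?_
    rw [← Finset.sum_smul, ← hz]; push_cast; rfl
  have hm : ((m + 1 : ℕ) : ℝ) ≠ 0 := by positivity
  simp only [EE_size_bias hn] at h1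
  rw [← Finset.smul_sum, div_eq_mul_inv, mul_smul] at h1
  exact smul_right_injective _ hm h1

lemma EE_zero (n : ℕ) (F : (Fin n → ℕ) → E) : EE n 0 F = F 0 := by
  simp [EE, stProb]

lemma EE_const {n : ℕ} (hn : 0 < n) (m : ℕ) (c : E) : EE n m (fun _ => c) = c := by
  induction m with
  | zero => rw [EE_zero]
  | succ m ih =>
    rw [EE_succ hn]; simp only [ih]
    have : (n : ℝ) ≠ 0 := by positivity
    rw [Finset.sum_const, Finset.card_univ, Fintype.card_fin, ← Nat.cast_smul_eq_nsmul ℝ,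
      smul_smul, inv_mul_cancel₀ this, one_smul]

end

lemma EE_mono {n m : ℕ} {F G : (Fin n → ℕ) → ℝ} (h : ∀ z, ∑ i, z i = m → F z ≤ G z) :
    EE n m F ≤ EE n m G := by
  refine Finset.sum_le_sum fun z hz => ?_
  exact mul_le_mul_of_nonneg_left (h z (mem_conf.1 hz)) (stProb_nonneg _ _ _)

lemma EE_nonneg {n m : ℕ} {F : (Fin n → ℕ) → ℝ} (h : ∀ z, 0 ≤ F z) : 0 ≤ EE n m F :=
  Finset.sum_nonneg fun z _ => mul_nonneg (stProb_nonneg _ _ _) (h z)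

lemma norm_EE_le {E : Type*} [NormedAddCommGroup E] [NormedSpace ℝ E] (n m : ℕ)
    (F : (Fin n → ℕ) → E) : ‖EE n m F‖ ≤ EE n m (fun z => ‖F z‖) := by
  unfold EE
  refine (norm_sum_le _ _).trans (Finset.sum_le_sum fun z _ => ?_)
  rw [norm_smul, Real.norm_of_nonneg (stProb_nonneg _ _ _), smul_eq_mul]

lemma EE_abs_sq_le {n : ℕ} (hn : 0 < n) (m : ℕ) (F : (Fin n → ℕ) → ℝ) :
    EE n m (fun z => |F z|) ^ 2 ≤ EE n m (fun z => F z ^ 2) := by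
  have h0 : 0 ≤ EE n m (fun z => (|F z| - EE n m (fun z => |F z|)) ^ 2) :=
    EE_nonneg fun z => sq_nonneg _
  set c := EE n m (fun z => |F z|) with hc
  have h1 : EE n m (fun z => (|F z| - c) ^ 2) =
      EE n m (fun z => F z ^ 2) - (2 * c) * c + c ^ 2 := by
    have : ∀ z, (|F z| - c) ^ 2 = (F z ^ 2 - (2 * c) • |F z|) + c ^ 2 := by
      intro z; rw [sub_sq, sq_abs, smul_eq_mul]; ring
    simp only [this]
    rw [EE_add, EE_sub, EE_smul, EE_const hn, ← hc, smul_eq_mul]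
  rw [h1] at h0
  nlinarith

/-! ### Moments and the Stein identity for the quadratic statistic -/

/-- The linear statistic `∑ c_i z_i`. -/
noncomputable def ell {n : ℕ} (c : Fin n → ℝ) (z : Fin n → ℕ) : ℝ := ∑ i, c i * (z i : ℝ)

/-- The quadratic statistic `∑ z_i²`. -/
noncomputable def SS {n : ℕ} (z : Fin n → ℕ) : ℝ := ∑ i, (z i : ℝ) ^ 2

lemma ell_single {n : ℕ} (c : Fin n → ℝ) (w : Fin n → ℕ) (j : Fin n) :
    ell c (w + Pi.single j 1) = ell c w + c j := by
  simp only [ell, Pi.add_apply, Nat.cast_add, mul_add, Finset.sum_add_distrib]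
  congr 1
  rw [Finset.sum_eq_single j]
  · simp
  · intro i _ hi; simp [hi]
  · simp

lemma SS_single {n : ℕ} (w : Fin n → ℕ) (j : Fin n) :
    SS (w + Pi.single j 1) = SS w + 2 * (w j : ℝ) + 1 := by
  have : ∀ i, (((w + Pi.single j 1 : Fin n → ℕ) i : ℕ) : ℝ) ^ 2 =
      (w i : ℝ) ^ 2 + (if i = j then 2 * (w j : ℝ) + 1 else 0) := by
    intro i
    by_cases h : i = j
    · subst h; simp; ring
    · simp [h]
  simp only [SS, this, Finset.sum_add_distrib, Finset.sum_ite_eq', Finset.mem_univ, if_true]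
  ring

lemma EE_ell {n : ℕ} (hn : 0 < n) (m : ℕ) {c : Fin n → ℝ} (hc : ∑ i, c i = 0) :
    EE n m (ell c) = 0 := by
  induction m with
  | zero => rw [EE_zero]; simp [ell]
  | succ m ih =>
    rw [EE_succ hn]
    simp only [ell_single]
    simp only [EE_add, EE_const hn, Finset.sum_add_distrib, hc]
    have : EE n m (fun z => ell c z) = 0 := ih
    simp [this]

lemma EE_ell_sq {n : ℕ} (hn : 0 < n) (m : ℕ) {c : Fin n → ℝ} (hc : ∑ i, c i = 0) :
    EE n m (fun z => ell c z ^ 2) = m * ((∑ i, c i ^ 2) / n) := by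
  have hn' : (n : ℝ) ≠ 0 := by positivity
  induction m with
  | zero => rw [EE_zero]; simp [ell]
  | succ m ih =>
    rw [EE_succ hn]
    simp only [ell_single]
    have h : ∀ j, EE n m (fun w => (ell c w + c j) ^ 2) =
        EE n m (fun z => ell c z ^ 2) + c j ^ 2 := by
      intro j
      have : ∀ w, (ell c w + c j) ^ 2 = ell c w ^ 2 + ((2 * c j) • ell c w + c j ^ 2) := by
        intro w; rw [smul_eq_mul]; ring
      simp only [this, EE_add, EE_smul, EE_const hn]
      have : EE n m (fun z => ell c z) = 0 := EE_ell hn m hc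
      rw [this]; simp
    simp only [h, Finset.sum_add_distrib, ih]
    simp
    field_simp

/-- Fourth moment bound for a centred linear statistic, by induction on the number of balls. -/
lemma EE_ell_four {n : ℕ} (hn : 0 < n) (m : ℕ) {c : Fin n → ℝ} (hc : ∑ i, c i = 0) :
    EE n m (fun z => ell c z ^ 4) ≤
      3 * (m * ((∑ i, c i ^ 2) / n)) ^ 2 + m * ((∑ i, c i ^ 4) / n) := by
  have hn' : (n : ℝ) ≠ 0 := by positivity
  induction m with
  | zero => rw [EE_zero]; simp [ell]
  | succ m ih =>
    rw [EE_succ hn]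
    simp only [ell_single]
    have h : ∀ j, EE n m (fun w => (ell c w + c j) ^ 4) =
        EE n m (fun z => ell c z ^ 4) + 4 * c j * EE n m (fun z => ell c z ^ 3)
          + 6 * (m * ((∑ i, c i ^ 2) / n)) * c j ^ 2 + c j ^ 4 := by
      intro j
      have : ∀ w, (ell c w + c j) ^ 4 = ell c w ^ 4 + (4 * c j) • ell c w ^ 3 +
          (6 * c j ^ 2) • ell c w ^ 2 + (4 * c j ^ 3) • ell c w + c j ^ 4 := by
        intro w; simp only [smul_eq_mul]; ring
      simp only [this, EE_add, EE_smul, EE_const hn, EE_ell_sq hn m hc]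
      have : EE n m (fun z => ell c z) = 0 := EE_ell hn m hc
      rw [this]; simp; ring
    have h2 : (n : ℝ)⁻¹ • ∑ j, EE n m (fun w => (ell c w + c j) ^ 4) =
        EE n m (fun z => ell c z ^ 4) + 6 * m * ((∑ i, c i ^ 2) / n) ^ 2
          + (∑ i, c i ^ 4) / n := by
      simp only [h, Finset.sum_add_distrib, ← Finset.mul_sum, ← Finset.sum_mul, hc, smul_eq_mul,
        Finset.sum_const, Finset.card_univ, Fintype.card_fin, nsmul_eq_mul]
      field_simp
      ring
    rw [h2]
    push_cast
    nlinarith [sq_nonneg ((∑ i, c i ^ 2) / n)]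

/-- Coefficients of the centred occupancy `z_i - m/n` as a linear statistic. -/
noncomputable def cen {n : ℕ} (i : Fin n) (j : Fin n) : ℝ := (if j = i then 1 else 0) - 1 / n

lemma cen_sum {n : ℕ} (hn : 0 < n) (i : Fin n) : ∑ j, cen i j = 0 := by
  have hn' : (n : ℝ) ≠ 0 := by positivity
  simp [cen, Finset.sum_sub_distrib, hn']

lemma cen_sum_sq {n : ℕ} (hn : 0 < n) (i : Fin n) : ∑ j, cen i j ^ 2 = 1 - 1 / n := by
  have hn' : (n : ℝ) ≠ 0 := by positivity
  have : ∀ j, cen i j ^ 2 = (if j = i then 1 - 2 / (n : ℝ) else 0) + 1 / (n : ℝ) ^ 2 := by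
    intro j; unfold cen; split_ifs <;> ring
  simp [this, Finset.sum_add_distrib]
  field_simp; ring

lemma cen_sum_four {n : ℕ} (hn : 0 < n) (i : Fin n) : ∑ j, cen i j ^ 4 ≤ 1 := by
  have hn1 : (1 : ℝ) ≤ n := by exact_mod_cast hn
  have h1 : (1 : ℝ) / n ≤ 1 := by rw [div_le_one (by positivity)]; exact hn1
  have h0 : (0 : ℝ) ≤ 1 / n := by positivity
  calc ∑ j, cen i j ^ 4 ≤ ∑ j, cen i j ^ 2 := by
        refine Finset.sum_le_sum fun j _ => ?_
        have : cen i j ^ 2 ≤ 1 := by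
          unfold cen; split_ifs <;> nlinarith
        nlinarith [sq_nonneg (cen i j)]
    _ = 1 - 1 / n := cen_sum_sq hn i
    _ ≤ 1 := by linarith

lemma ell_cen {n : ℕ} {m : ℕ} {w : Fin n → ℕ} (hw : ∑ i, w i = m) (i : Fin n) :
    ell (cen i) w = (w i : ℝ) - m / n := by
  have hw' : ∑ i, (w i : ℝ) = m := by exact_mod_cast hw
  simp only [ell, cen, sub_mul, Finset.sum_sub_distrib, ← Finset.mul_sum, hw']
  simp; ring

/-- Mean of `∑ z_i²` under ST(m,n). -/
noncomputable def meanS (n m : ℕ) : ℝ := m + m * (m - 1) / n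

lemma sum_cen {n m : ℕ} (hn : 0 < n) {w : Fin n → ℕ} (hw : ∑ i, w i = m) :
    ∑ i, ell (cen i) w = 0 := by
  have hn' : (n : ℝ) ≠ 0 := by positivity
  have hw' : ∑ i, (w i : ℝ) = m := by exact_mod_cast hw
  simp only [ell_cen hw, Finset.sum_sub_distrib, hw']
  simp; field_simp; ring

lemma sum_cen_sq {n m : ℕ} (hn : 0 < n) {w : Fin n → ℕ} (hw : ∑ i, w i = m) :
    ∑ i, ell (cen i) w ^ 2 = SS w - (m : ℝ) ^ 2 / n := by
  have hn' : (n : ℝ) ≠ 0 := by positivity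
  have hw' : ∑ i, (w i : ℝ) = m := by exact_mod_cast hw
  simp only [ell_cen hw, sub_sq, Finset.sum_sub_distrib, Finset.sum_add_distrib, SS,
    ← Finset.sum_mul, ← Finset.mul_sum, hw']
  simp; field_simp; ring

/-- Stein identity for `S = ∑ z_i²`: size biasing expresses `E_{m+1}[(S - E S) f(S)]` through
the configuration `w` of the other `m` balls, with `x_i = w_i - m/n`. -/
lemma stein_id {E : Type*} [AddCommGroup E] [Module ℝ E] {n : ℕ} (hn : 0 < n) (m : ℕ)
    (f : ℝ → E) :
    EE n (m + 1) (fun z => (SS z - meanS n (m + 1)) • f (SS z)) =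
      (((m + 1 : ℕ) : ℝ) / n) • EE n m (fun w => ∑ i, ell (cen i) w •
        f (SS w + 2 * m / n + 1 + 2 * ell (cen i) w)) := by
  have hn' : (n : ℝ) ≠ 0 := by positivity
  have h1 : EE n (m + 1) (fun z => SS z • f (SS z)) =
      ∑ i, (((m + 1 : ℕ) : ℝ) / n) • EE n m (fun w => ((w i : ℝ) + 1) •
        f (SS w + 2 * (w i : ℝ) + 1)) := by
    have : ∀ i, (((m + 1 : ℕ) : ℝ) / n) • EE n m (fun w => ((w i : ℝ) + 1) •
        f (SS w + 2 * (w i : ℝ) + 1)) =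
        EE n (m + 1) (fun z => (z i : ℝ) • ((z i : ℝ) • f (SS z))) := by
      intro i
      rw [EE_size_bias hn]
      simp [SS_single]
    simp only [this]
    rw [← EE_sum]
    congr 1; ext z
    simp only [smul_smul, ← Finset.sum_smul, SS, sq]
  have h2 := EE_succ hn m (fun z => meanS n (m + 1) • f (SS z))
  simp only [sub_smul]
  rw [EE_sub, h1, h2]
  simp only [SS_single]
  rw [Finset.smul_sum, ← Finset.sum_sub_distrib, EE_sum, Finset.smul_sum]
  refine Finset.sum_congr rfl fun i _ => ?_
  rw [← EE_smul, ← EE_smul, ← EE_sub, ← EE_smul]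
  refine EE_congr fun w hw => ?_
  rw [ell_cen hw]
  have : SS w + 2 * m / n + 1 + 2 * ((w i : ℝ) - m / n) = SS w + 2 * (w i : ℝ) + 1 := by ring
  rw [this, smul_smul, smul_smul, smul_smul, ← sub_smul]
  congr 1
  unfold meanS; push_cast; field_simp; ring

lemma EE_SS {n : ℕ} (hn : 0 < n) (m : ℕ) : EE n m SS = meanS n m := by
  have hn' : (n : ℝ) ≠ 0 := by positivity
  cases m with
  | zero => rw [EE_zero]; simp [SS, meanS]
  | succ m =>
    have h := stein_id hn m (fun _ => (1 : ℝ))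
    have h2 : EE n m (fun w => ∑ i, ell (cen i) w • (1 : ℝ)) = 0 := by
      rw [← EE_const hn m (0 : ℝ)]
      refine EE_congr fun w hw => ?_
      simpa using sum_cen hn hw
    rw [h2] at h
    simp only [smul_eq_mul, mul_one, mul_zero] at h
    rw [EE_sub, EE_const hn] at h
    have : EE n (m + 1) (fun z => SS z) = EE n (m + 1) SS := rfl
    linarith

/-- `E_m ∑ (w_i - m/n)² = m (1 - 1/n)`. -/
lemma EE_D {n : ℕ} (hn : 0 < n) (m : ℕ) :
    EE n m (fun w => ∑ i, ell (cen i) w ^ 2) = m * (1 - 1 / n) := by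
  have hn' : (n : ℝ) ≠ 0 := by positivity
  rw [EE_sum]
  simp only [EE_ell_sq hn m (cen_sum hn _), cen_sum_sq hn]
  simp; field_simp

lemma var_SS {n : ℕ} (hn : 0 < n) (m : ℕ) :
    EE n m (fun z => (SS z - meanS n m) ^ 2) ≤ 2 * (m : ℝ) ^ 2 / n := by
  have hn' : (n : ℝ) ≠ 0 := by positivity
  cases m with
  | zero => rw [EE_zero]; simp [SS, meanS]
  | succ m =>
    have h := stein_id hn m (fun x => x - meanS n (m + 1))
    have h2 : EE n m (fun w => ∑ i, ell (cen i) w •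
        (SS w + 2 * m / n + 1 + 2 * ell (cen i) w - meanS n (m + 1))) =
        2 * (m * (1 - 1 / n)) := by
      rw [← EE_D hn m, ← smul_eq_mul (2 : ℝ) (EE n m _), ← EE_smul]
      refine EE_congr fun w hw => ?_
      have : ∀ i, ell (cen i) w •
          (SS w + 2 * m / n + 1 + 2 * ell (cen i) w - meanS n (m + 1)) =
          ell (cen i) w * (SS w + 2 * m / n + 1 - meanS n (m + 1)) +
            2 * ell (cen i) w ^ 2 := by
        intro i; rw [smul_eq_mul]; ring
      simp only [this, Finset.sum_add_distrib, ← Finset.sum_mul, ← Finset.mul_sum,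
        sum_cen hn hw, smul_eq_mul]
      ring
    rw [h2] at h
    simp only [smul_eq_mul, ← sq] at h
    rw [h]
    push_cast
    have h3 : (0 : ℝ) ≤ 1 / n := by positivity
    have h4 : (m : ℝ) * (1 - 1 / n) ≤ m + 1 := by nlinarith [(Nat.cast_nonneg m : (0 : ℝ) ≤ m)]
    have h5 : ((m : ℝ) + 1) / n * (2 * (m * (1 - 1 / n))) ≤ ((m : ℝ) + 1) / n * (2 * (m + 1)) := by
      gcongr
    refine h5.trans (le_of_eq ?_)
    ring

/-- Third absolute moments of the centred occupancies, interpolated between the second and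
fourth ones. -/
lemma EE_abs_three {n : ℕ} (hn : 0 < n) (m : ℕ) {r : ℝ} (hr : 1 ≤ r)
    (hm : (m : ℝ) / n ≤ r ^ 2) :
    EE n m (fun w => ∑ i, |ell (cen i) w| ^ 3) ≤ n * (3 * r ^ 3) := by
  have hn1 : (1 : ℝ) ≤ n := by exact_mod_cast hn
  have hr0 : 0 < r := by linarith
  rw [EE_sum]
  have key : ∀ i : Fin n, EE n m (fun w => |ell (cen i) w| ^ 3) ≤ 3 * r ^ 3 := by
    intro i
    -- `|x|³ ≤ (r x² + x⁴ / r) / 2`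
    have h1 : EE n m (fun w => |ell (cen i) w| ^ 3) ≤
        EE n m (fun w => (r / 2) • ell (cen i) w ^ 2 + (1 / (2 * r)) • ell (cen i) w ^ 4) := by
      refine EE_mono fun w _ => ?_
      rw [smul_eq_mul, smul_eq_mul, ← sq_abs (ell (cen i) w),
        ← Even.pow_abs (by decide : Even 4) (ell (cen i) w)]
      generalize |ell (cen i) w| = x
      have : r / 2 * x ^ 2 + 1 / (2 * r) * x ^ 4 - x ^ 3 = x ^ 2 * (r - x) ^ 2 / (2 * r) := by
        field_simp; ring
      have h0 : 0 ≤ x ^ 2 * (r - x) ^ 2 / (2 * r) := by positivity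
      linarith
    have h4 := EE_ell_four hn m (cen_sum hn i)
    rw [EE_add, EE_smul, EE_smul, EE_ell_sq hn m (cen_sum hn i)] at h1
    rw [cen_sum_sq hn] at h1 h4
    have hq : (m : ℝ) * ((1 - 1 / n) / n) ≤ r ^ 2 := by
      refine le_trans ?_ hm
      have h3 : (0 : ℝ) ≤ 1 / n := by positivity
      have : (m : ℝ) * ((1 - 1 / n) / n) = (m : ℝ) / n * (1 - 1 / n) := by ring
      rw [this]
      have h5 : (0 : ℝ) ≤ (m : ℝ) / n := by positivity
      nlinarith
    have hq0 : 0 ≤ (m : ℝ) * ((1 - 1 / n) / n) := by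
      have : (0 : ℝ) ≤ 1 - 1 / n := by
        rw [sub_nonneg, div_le_one (by positivity)]; exact hn1
      positivity
    have hq4 : (m : ℝ) * ((∑ j, cen i j ^ 4) / n) ≤ r ^ 2 := by
      refine le_trans ?_ hm
      rw [← mul_div_assoc]
      gcongr
      exact mul_le_of_le_one_right (by positivity) (cen_sum_four hn i)
    generalize (m : ℝ) * ((1 - 1 / n) / n) = q at *
    have hq2 : q ^ 2 ≤ (r ^ 2) ^ 2 := by gcongr
    have hr4 : r ^ 2 ≤ (r ^ 2) ^ 2 := by
      have : 1 ≤ r ^ 2 := by nlinarith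
      nlinarith
    have h5 : EE n m (fun z => ell (cen i) z ^ 4) ≤ 4 * (r ^ 2) ^ 2 := by linarith
    have h6 : (1 / (2 * r)) * EE n m (fun z => ell (cen i) z ^ 4) ≤
        (1 / (2 * r)) * (4 * (r ^ 2) ^ 2) := by gcongr
    have h7 : (1 / (2 * r)) * (4 * (r ^ 2) ^ 2) = 2 * r ^ 3 := by field_simp; ring
    have h8 : r / 2 * q ≤ r / 2 * r ^ 2 := by gcongr
    simp only [smul_eq_mul] at h1
    have h9 : r ^ 3 ≥ 0 := by positivity
    nlinarith
  calc _ ≤ ∑ i : Fin n, 3 * r ^ 3 := Finset.sum_le_sum fun i _ => key i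
    _ = _ := by simp

/-! ### Characteristic function of the quadratic statistic -/

/-- Standard deviation scale of `∑ z_i²` under ST(m,n). -/
noncomputable def sdS (n m : ℕ) : ℝ := m * Real.sqrt 2 / Real.sqrt n

/-- The character `θ ↦ exp(iθ)` of the real line. -/
noncomputable def chr (θ : ℝ) : ℂ := Complex.exp (Complex.I * (θ : ℂ))

lemma chr_norm (θ : ℝ) : ‖chr θ‖ = 1 := Complex.norm_exp_I_mul_ofReal θ

lemma chr_add (a b : ℝ) : chr (a + b) = chr a * chr b := by
  unfold chr; rw [← Complex.exp_add]; congr 1; push_cast; ring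

lemma chr_sub_one (θ : ℝ) : ‖chr θ - 1‖ ≤ |θ| := Real.norm_exp_I_mul_ofReal_sub_one_le

lemma chr_taylor (θ : ℝ) : ‖chr θ - 1 - Complex.I * θ‖ ≤ 2 * θ ^ 2 := by
  rcases le_total |θ| 1 with h | h
  · have : ‖Complex.I * (θ : ℂ)‖ = |θ| := by simp
    have h2 := Complex.norm_exp_sub_one_sub_id_le (x := Complex.I * (θ : ℂ)) (by rw [this]; exact h)
    rw [this, sq_abs] at h2
    unfold chr
    nlinarith [sq_nonneg θ]
  · have h1 := chr_sub_one θ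
    have : ‖Complex.I * (θ : ℂ)‖ = |θ| := by simp
    have h3 := norm_sub_le (chr θ - 1) (Complex.I * θ)
    rw [this] at h3
    rw [← sq_abs]
    nlinarith

lemma chr_hasDerivAt (a t : ℝ) :
    HasDerivAt (fun t : ℝ => chr (t * a)) (Complex.I * a * chr (t * a)) t := by
  have h1 : HasDerivAt (fun t : ℝ => Complex.I * ((t * a : ℝ) : ℂ)) (Complex.I * a) t := by
    have : HasDerivAt (fun t : ℝ => ((t * a : ℝ) : ℂ)) ((1 * a : ℝ) : ℂ) t :=
      ((hasDerivAt_id t).mul_const a).ofReal_comp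
    simpa using this.const_mul Complex.I
  have h2 := h1.cexp
  unfold chr
  convert h2 using 1
  ring

/-- Characteristic function of the normalised quadratic statistic under ST(m,n). -/
noncomputable def phiS (n m : ℕ) (t : ℝ) : ℂ :=
  EE n m (fun z => chr (t * ((SS z - meanS n m) / sdS n m)))

/-- Derivative of `phiS`. -/
noncomputable def dphiS (n m : ℕ) (t : ℝ) : ℂ :=
  EE n m (fun z => Complex.I * ((SS z - meanS n m) / sdS n m : ℝ) *
    chr (t * ((SS z - meanS n m) / sdS n m)))

lemma phiS_hasDerivAt (n m : ℕ) (t : ℝ) : HasDerivAt (phiS n m) (dphiS n m t) t := by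
  unfold phiS dphiS EE
  refine HasDerivAt.fun_sum fun z _ => ?_
  exact (chr_hasDerivAt _ t).const_smul _

/-- The Stein identity applied to `f(x) = e^{iτ(x - c)}`: expanding `f(S + 2x_i)` to second order
in `x_i` turns it into a first-order equation in `τ`, with an explicit remainder. -/
lemma phiS_remainder {n : ℕ} (hn : 0 < n) (m : ℕ) (f : ℝ → ℂ) (τ c : ℝ)
    (hf : f = fun x => chr (τ * (x - c))) :
    ‖EE n (m + 1) (fun z => (SS z - meanS n (m + 1)) • f (SS z)) -
      ((((m + 1 : ℕ) : ℝ) / n * (2 * τ * (m * (1 - 1 / n))) : ℝ) : ℂ) * Complex.I *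
        EE n (m + 1) (fun z => f (SS z))‖ ≤
    ((m + 1 : ℕ) : ℝ) / n * (2 * |τ| * EE n m (fun z => |SS z - meanS n m|) +
      8 * τ ^ 2 * EE n m (fun w => ∑ i, |ell (cen i) w| ^ 3) +
      16 * |τ| ^ 3 * (m * (1 - 1 / n)) ^ 2 / n) := by
  have hn0 : (0 : ℝ) < n := by exact_mod_cast hn
  have hn' : (n : ℝ) ≠ 0 := hn0.ne'
  have hn1 : (1 : ℝ) ≤ n := by exact_mod_cast hn
  set Db : ℝ := m * (1 - 1 / n) with hDb
  have hDb0 : 0 ≤ Db := by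
    have : (0 : ℝ) ≤ 1 - 1 / n := by
      rw [sub_nonneg, div_le_one (by positivity)]; exact hn1
    positivity
  let Rm : ℝ → ℂ := fun θ => chr θ - 1 - Complex.I * θ
  have hR : ∀ θ, ‖Rm θ‖ ≤ 2 * θ ^ 2 := chr_taylor
  have hchr : ∀ θ, chr θ = 1 + Complex.I * θ + Rm θ := by intro θ; simp only [Rm]; ring
  have hfadd : ∀ x y, f (x + y) = f x * chr (τ * y) := by
    intro x y; simp only [hf]; rw [← chr_add]; congr 1; ring
  have hfn : ∀ x, ‖f x‖ = 1 := by intro x; simp only [hf]; exact chr_norm _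
  rw [stein_id hn]
  have h2 : EE n (m + 1) (fun z => f (SS z)) = EE n m (fun w => f (SS w + 2 * m / n + 1) *
      (1 + (n : ℂ)⁻¹ * ∑ i, Rm (τ * (2 * ell (cen i) w)))) := by
    rw [EE_succ hn, ← EE_sum, ← EE_smul]
    refine EE_congr fun w hw => ?_
    have h3 : ∀ i, f (SS (w + Pi.single i 1)) = f (SS w + 2 * m / n + 1) *
        (1 + Complex.I * ((τ * (2 * ell (cen i) w) : ℝ) : ℂ) +
          Rm (τ * (2 * ell (cen i) w))) := by
      intro i
      rw [← hchr, ← hfadd, SS_single, ell_cen hw]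
      congr 1; ring
    have hs : ∑ i, ((ell (cen i) w : ℝ) : ℂ) = 0 := by
      rw [← Complex.ofReal_sum, sum_cen hn hw]; simp
    simp only [h3, ← Finset.mul_sum, Finset.sum_add_distrib]
    push_cast
    simp only [← Finset.mul_sum, hs]
    have hnc : (n : ℂ) ≠ 0 := by exact_mod_cast hn'
    simp
    field_simp
  rw [h2]
  have h4 : ∀ (a : ℂ) (G : (Fin n → ℕ) → ℂ), a * EE n m G = EE n m (fun w => a * G w) := by
    intro a G
    unfold EE
    rw [Finset.mul_sum]
    refine Finset.sum_congr rfl fun z _ => ?_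
    simp only [Complex.real_smul]; ring
  rw [← EE_smul, h4, ← EE_sub]
  have h5 : ((m + 1 : ℕ) : ℝ) / n * (2 * |τ| * EE n m (fun z => |SS z - meanS n m|) +
      8 * τ ^ 2 * EE n m (fun w => ∑ i, |ell (cen i) w| ^ 3) + 16 * |τ| ^ 3 * Db ^ 2 / n) =
      EE n m (fun w => (((m + 1 : ℕ) : ℝ) / n) • ((2 * |τ|) • |SS w - meanS n m| +
        (8 * τ ^ 2) • ∑ i, |ell (cen i) w| ^ 3 +
        (16 * |τ| ^ 3 * Db / n) • ∑ i, ell (cen i) w ^ 2)) := by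
    rw [EE_smul, EE_add, EE_add, EE_smul, EE_smul, EE_smul, EE_D hn, ← hDb]
    simp only [smul_eq_mul]; ring
  rw [h5]
  refine (norm_EE_le _ _ _).trans (EE_mono fun w hw => ?_)
  have hD : ∑ i, ell (cen i) w ^ 2 = Db + (SS w - meanS n m) := by
    rw [sum_cen_sq hn hw, hDb, meanS]; field_simp; ring
  have hs : ∑ i, ((ell (cen i) w : ℝ) : ℂ) = 0 := by
    rw [← Complex.ofReal_sum, sum_cen hn hw]; simp
  have h6 : ∑ i, ell (cen i) w • f (SS w + 2 * m / n + 1 + 2 * ell (cen i) w) =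
      f (SS w + 2 * m / n + 1) * (2 * τ * Complex.I * ((Db + (SS w - meanS n m) : ℝ) : ℂ) +
        ∑ i, (ell (cen i) w : ℂ) * Rm (τ * (2 * ell (cen i) w))) := by
    rw [← hD]
    have h3 : ∀ i, ell (cen i) w • f (SS w + 2 * m / n + 1 + 2 * ell (cen i) w) =
        f (SS w + 2 * m / n + 1) * ((ell (cen i) w : ℂ) +
          2 * τ * Complex.I * (ell (cen i) w : ℂ) ^ 2 +
          (ell (cen i) w : ℂ) * Rm (τ * (2 * ell (cen i) w))) := by
      intro i
      rw [hfadd, hchr]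
      simp only [Complex.real_smul]
      push_cast; ring
    simp only [h3, ← Finset.mul_sum, Finset.sum_add_distrib, hs]
    push_cast
    ring
  rw [h6]
  set Fs := f (SS w + 2 * m / n + 1)
  set R1 := ∑ i, (ell (cen i) w : ℂ) * Rm (τ * (2 * ell (cen i) w))
  set R3 := ∑ i, Rm (τ * (2 * ell (cen i) w))
  have hR1 : ‖R1‖ ≤ 8 * τ ^ 2 * ∑ i, |ell (cen i) w| ^ 3 := by
    refine (norm_sum_le _ _).trans ?_
    rw [Finset.mul_sum]
    refine Finset.sum_le_sum fun i _ => ?_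
    rw [norm_mul, Complex.norm_real, Real.norm_eq_abs]
    calc |ell (cen i) w| * ‖Rm (τ * (2 * ell (cen i) w))‖
        ≤ |ell (cen i) w| * (2 * (τ * (2 * ell (cen i) w)) ^ 2) := by
          gcongr; exact hR _
      _ = 8 * τ ^ 2 * (|ell (cen i) w| * ell (cen i) w ^ 2) := by ring
      _ = _ := by rw [← sq_abs (ell (cen i) w)]; ring
  have hR3 : ‖R3‖ ≤ 8 * τ ^ 2 * ∑ i, ell (cen i) w ^ 2 := by
    refine (norm_sum_le _ _).trans ?_
    rw [Finset.mul_sum]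
    refine Finset.sum_le_sum fun i _ => ?_
    refine (hR _).trans (le_of_eq (by ring))
  have h7 : (((m + 1 : ℕ) : ℝ) / n) • (Fs * (2 * τ * Complex.I *
        ((Db + (SS w - meanS n m) : ℝ) : ℂ) + R1)) -
      ((((m + 1 : ℕ) : ℝ) / n * (2 * τ * Db) : ℝ) : ℂ) * Complex.I *
        (Fs * (1 + (n : ℂ)⁻¹ * R3)) =
      ((((m + 1 : ℕ) : ℝ) / n : ℝ) : ℂ) * (Fs * (((2 * τ * (SS w - meanS n m) : ℝ) : ℂ) * Complex.I
        + R1 - ((2 * τ * Db / n : ℝ) : ℂ) * Complex.I * R3)) := by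
    simp only [Complex.real_smul]
    push_cast
    ring
  rw [h7, norm_mul, norm_mul, hfn, one_mul, Complex.norm_real, smul_eq_mul,
    Real.norm_of_nonneg (by positivity)]
  refine mul_le_mul_of_nonneg_left ?_ (by positivity)
  refine (norm_sub_le _ _).trans (add_le_add ((norm_add_le _ _).trans (add_le_add ?_ ?_)) ?_)
  · rw [norm_mul, Complex.norm_I, mul_one, Complex.norm_real, Real.norm_eq_abs, abs_mul, abs_mul,
      smul_eq_mul, abs_of_pos (by norm_num : (0 : ℝ) < 2)]
  · exact hR1
  · rw [norm_mul, norm_mul, Complex.norm_I, mul_one, Complex.norm_real, Real.norm_eq_abs,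
      abs_div, abs_mul, abs_mul, abs_of_pos (by norm_num : (0 : ℝ) < 2), abs_of_nonneg hDb0,
      abs_of_pos hn0, smul_eq_mul]
    calc 2 * |τ| * Db / n * ‖R3‖ ≤ 2 * |τ| * Db / n * (8 * τ ^ 2 * ∑ i, ell (cen i) w ^ 2) := by
          gcongr
      _ = _ := by rw [← sq_abs τ]; ring

lemma sdS_sq (n m : ℕ) : sdS n m ^ 2 = 2 * (m : ℝ) ^ 2 / n := by
  unfold sdS
  rw [div_pow, mul_pow, Real.sq_sqrt (by norm_num), Real.sq_sqrt (by positivity)]; ring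

lemma sdS_pos {n m : ℕ} (hn : 0 < n) (hm : 0 < m) : 0 < sdS n m := by
  unfold sdS; positivity

set_option maxHeartbeats 1000000 in
/-- The approximate differential equation `φ' = -tφ` for the characteristic function. -/
lemma dphiS_bound {n m : ℕ} (hn : 0 < n) (hm : n ≤ m + 1) (t : ℝ) :
    ‖dphiS n (m + 1) t + t * phiS n (m + 1) t‖ ≤
      12 / Real.sqrt n * (|t| + |t| ^ 2 + |t| ^ 3) := by
  have hn0 : (0 : ℝ) < n := by exact_mod_cast hn
  have hn1 : (1 : ℝ) ≤ n := by exact_mod_cast hn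
  have hm' : (n : ℝ) ≤ ((m + 1 : ℕ) : ℝ) := by exact_mod_cast hm
  have hmM : (m : ℝ) = ((m + 1 : ℕ) : ℝ) - 1 := by push_cast; ring
  set M : ℝ := ((m + 1 : ℕ) : ℝ) with hM
  set s := sdS n (m + 1) with hs
  have hs0 : 0 < s := sdS_pos hn (Nat.succ_pos m)
  have hM0 : 0 < M := by linarith
  have hss : s ^ 2 = 2 * M ^ 2 / n := sdS_sq n (m + 1)
  have key := phiS_remainder hn m (fun x => chr (t / s * (x - meanS n (m + 1)))) (t / s)
    (meanS n (m + 1)) rfl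
  have hphi : EE n (m + 1) (fun z => chr (t / s * (SS z - meanS n (m + 1)))) =
      phiS n (m + 1) t := by
    unfold phiS; congr 1; ext z; congr 1; rw [← hs]; ring
  have hdphi : dphiS n (m + 1) t = (Complex.I / s) * EE n (m + 1) (fun z =>
      (SS z - meanS n (m + 1)) • chr (t / s * (SS z - meanS n (m + 1)))) := by
    unfold dphiS EE
    rw [Finset.mul_sum]
    refine Finset.sum_congr rfl fun z _ => ?_
    beta_reduce
    rw [← hs, show t * ((SS z - meanS n (m + 1)) / s) = t / s * (SS z - meanS n (m + 1)) by ring]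
    simp only [Complex.real_smul]
    push_cast; ring
  simp only [hphi] at key
  rw [← hM] at key
  set P := phiS n (m + 1) t with hP
  set Aq := EE n (m + 1) (fun z =>
      (SS z - meanS n (m + 1)) • chr (t / s * (SS z - meanS n (m + 1))))
  set Db : ℝ := m * (1 - 1 / n) with hDb
  have hinv : (0 : ℝ) ≤ 1 - 1 / n := by
      rw [sub_nonneg, div_le_one (by positivity)]; exact hn1
  have hDb0 : 0 ≤ Db := by positivity
  have hDbM : Db ≤ M := by
    have h3 : (0 : ℝ) ≤ 1 / n := by positivity
    rw [hDb]; nlinarith [(Nat.cast_nonneg m : (0 : ℝ) ≤ m)]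
  have hPn : ‖P‖ ≤ 1 := by
    rw [hP]; unfold phiS
    refine (norm_EE_le _ _ _).trans ?_
    simp only [chr_norm]
    rw [EE_const hn]
  have heq : dphiS n (m + 1) t + t * P =
      (Complex.I / s) * (Aq - ((M / n * (2 * (t / s) * Db) : ℝ) : ℂ) * Complex.I * P) +
        ((t * (1 - Db / M) : ℝ) : ℂ) * P := by
    rw [hdphi]
    have e : M / n * (2 * (t / s) * Db) / s = t * (Db / M) := by
      have : M / n * (2 * (t / s) * Db) / s = 2 * M * t * Db / n / s ^ 2 := by
        field_simp
      rw [this, hss]; field_simp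
    have e2 : Complex.I / s * (((M / n * (2 * (t / s) * Db) : ℝ) : ℂ) * Complex.I * P) =
        - ((t * (Db / M) : ℝ) : ℂ) * P := by
      rw [← e]
      push_cast
      linear_combination ((M / n * (2 * (t / s) * Db) / s : ℂ) * P) * Complex.I_sq
    rw [mul_sub, e2]
    push_cast; ring
  rw [heq]
  refine (norm_add_le _ _).trans ?_
  have hT4 : ‖((t * (1 - Db / M) : ℝ) : ℂ) * P‖ ≤ |t| * (2 / n) := by
    rw [norm_mul, Complex.norm_real, Real.norm_eq_abs, abs_mul]
    have h1 : 0 ≤ 1 - Db / M := by rw [sub_nonneg, div_le_one hM0]; exact hDbM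
    have h2 : 1 - Db / M ≤ 2 / n := by
      have : 1 - Db / M = 1 / M + (1 - 1 / M) * (1 / n) := by
        rw [hDb, hmM]; field_simp; ring
      rw [this]
      have h5 : 1 / M ≤ 1 / (n : ℝ) := one_div_le_one_div_of_le hn0 hm'
      have h6 : (0 : ℝ) ≤ 1 / M := by positivity
      have h7 : (0 : ℝ) ≤ 1 / n := by positivity
      have h8 : (2 : ℝ) / n = 1 / n + 1 / n := by ring
      rw [h8]; nlinarith
    rw [abs_of_nonneg h1]
    calc |t| * (1 - Db / M) * ‖P‖ ≤ |t| * (1 - Db / M) * 1 := by gcongr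
      _ ≤ _ := by rw [mul_one]; gcongr
  set u := M / (n * s) with hu
  have hu0 : 0 < u := by positivity
  have hsn : 0 < Real.sqrt n := Real.sqrt_pos.2 hn0
  have hsn2 : Real.sqrt n ^ 2 = n := Real.sq_sqrt hn0.le
  have hsn1 : 1 ≤ Real.sqrt n := by rw [Real.one_le_sqrt]; exact hn1
  have huu : u ^ 2 = 1 / (2 * n) := by
    rw [hu, div_pow, mul_pow, hss]; field_simp
  have hu1 : u ≤ 1 / Real.sqrt n := by
    refine le_of_sq_le_sq ?_ (by positivity)
    rw [huu, div_pow, hsn2]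
    rw [one_pow]
    exact one_div_le_one_div_of_le hn0 (by linarith)
  set r := Real.sqrt (M / n) with hr
  have hr2 : r ^ 2 = M / n := Real.sq_sqrt (by positivity)
  have hr1 : 1 ≤ r := by
    rw [hr, Real.one_le_sqrt, le_div_iff₀ hn0]; linarith
  have hE3 := EE_abs_three hn m hr1 (by rw [hr2]; gcongr; linarith)
  have hE1 : EE n m (fun z => |SS z - meanS n m|) ≤ s := by
    refine le_of_sq_le_sq ?_ hs0.le
    refine (EE_abs_sq_le hn m (fun z => SS z - meanS n m)).trans ((var_SS hn m).trans ?_)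
    rw [hss]; gcongr; linarith
  have hs1 : 1 ≤ s := by
    refine le_of_sq_le_sq ?_ hs0.le
    rw [hss, one_pow, le_div_iff₀ hn0]
    nlinarith
  have hs4 : s ^ 2 = 2 * n * r ^ 4 := by
    rw [hss, show r ^ 4 = (r ^ 2) ^ 2 by ring, hr2]; field_simp
  have hA : ‖(Complex.I / s) * (Aq - ((M / n * (2 * (t / s) * Db) : ℝ) : ℂ) * Complex.I * P)‖ ≤
      u * (2 * |t| + 12 * |t| ^ 2 + 8 * |t| ^ 3) := by
    rw [norm_mul, norm_div, Complex.norm_I, Complex.norm_real, Real.norm_of_nonneg hs0.le]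
    refine (mul_le_mul_of_nonneg_left key (by positivity)).trans ?_
    have habs : |t / s| = |t| / s := by rw [abs_div, abs_of_pos hs0]
    have e1 : 2 * |t / s| * EE n m (fun z => |SS z - meanS n m|) ≤ 2 * |t| := by
      calc _ ≤ 2 * |t / s| * s := by gcongr
        _ = 2 * |t| := by rw [habs]; field_simp
    have e2 : 8 * (t / s) ^ 2 * EE n m (fun w => ∑ i, |ell (cen i) w| ^ 3) ≤ 12 * |t| ^ 2 := by
      calc _ ≤ 8 * (t / s) ^ 2 * (n * (3 * r ^ 3)) := by gcongr
        _ = 12 * |t| ^ 2 / r := by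
          rw [div_pow, hs4, sq_abs]; field_simp; ring
        _ ≤ 12 * |t| ^ 2 := div_le_self (by positivity) hr1
    have e3 : 16 * |t / s| ^ 3 * Db ^ 2 / n ≤ 8 * |t| ^ 3 := by
      calc _ ≤ 16 * |t / s| ^ 3 * M ^ 2 / n := by gcongr
        _ = 8 * |t| ^ 3 / s := by
          have : M ^ 2 = s ^ 2 * n / 2 := by rw [hss]; field_simp
          rw [habs, this]; field_simp; ring
        _ ≤ 8 * |t| ^ 3 := div_le_self (by positivity) hs1
    calc 1 / s * (M / n * (2 * |t / s| * EE n m (fun z => |SS z - meanS n m|) +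
      8 * (t / s) ^ 2 * EE n m (fun w => ∑ i, |ell (cen i) w| ^ 3) +
      16 * |t / s| ^ 3 * Db ^ 2 / n))
        ≤ 1 / s * (M / n * (2 * |t| + 12 * |t| ^ 2 + 8 * |t| ^ 3)) := by gcongr
      _ = _ := by rw [hu]; field_simp
  have hT4' : |t| * (2 / n) ≤ 2 * |t| / Real.sqrt n := by
    have : (2 : ℝ) / n ≤ 2 / Real.sqrt n := by
      have h9 : Real.sqrt n ≤ n :=
        calc Real.sqrt n ≤ Real.sqrt n ^ 2 := le_self_pow₀ hsn1 (by norm_num)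
          _ = n := hsn2
      gcongr
    calc _ ≤ |t| * (2 / Real.sqrt n) := by gcongr
      _ = _ := by ring
  have hA' : u * (2 * |t| + 12 * |t| ^ 2 + 8 * |t| ^ 3) ≤
      1 / Real.sqrt n * (2 * |t| + 12 * |t| ^ 2 + 8 * |t| ^ 3) := by gcongr
  have hfin : 12 / Real.sqrt n * (|t| + |t| ^ 2 + |t| ^ 3) -
      (1 / Real.sqrt n * (2 * |t| + 12 * |t| ^ 2 + 8 * |t| ^ 3) + 2 * |t| / Real.sqrt n) =
      1 / Real.sqrt n * (8 * |t| + 4 * |t| ^ 3) := by ring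
  have : 0 ≤ 1 / Real.sqrt n * (8 * |t| + 4 * |t| ^ 3) := by positivity
  linarith

/-- Quantitative central limit theorem for `∑ z_i²` at the level of characteristic functions:
`phiS` nearly solves `φ' = -tφ`. -/
lemma phiS_clt {n m : ℕ} (hn : 0 < n) (hm : n ≤ m) (t : ℝ) :
    ‖phiS n m t - Complex.exp (-(t : ℂ) ^ 2 / 2)‖ ≤
      12 / Real.sqrt n * (|t| + |t| ^ 2 + |t| ^ 3) * |t| := by
  obtain ⟨m, rfl⟩ : ∃ m', m = m' + 1 := ⟨m - 1, by omega⟩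
  set B := 12 / Real.sqrt n * (|t| + |t| ^ 2 + |t| ^ 3) with hB
  let g : ℝ → ℂ := fun x => phiS n (m + 1) x * Complex.exp ((x : ℂ) ^ 2 / 2)
  have hexp : ∀ x : ℝ, HasDerivAt (fun x : ℝ => Complex.exp ((x : ℂ) ^ 2 / 2))
      (Complex.exp ((x : ℂ) ^ 2 / 2) * x) x := by
    intro x
    have h1 : HasDerivAt (fun x : ℝ => ((x ^ 2 / 2 : ℝ) : ℂ)) ((x : ℝ) : ℂ) x := by
      have : HasDerivAt (fun x : ℝ => x ^ 2 / 2) x x := by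
        have := (hasDerivAt_pow 2 x).div_const 2
        simpa using this
      exact this.ofReal_comp
    have := h1.cexp
    push_cast at this
    exact this
  have hg : ∀ x, HasDerivAt g
      ((dphiS n (m + 1) x + x * phiS n (m + 1) x) * Complex.exp ((x : ℂ) ^ 2 / 2)) x := by
    intro x
    have h := (phiS_hasDerivAt n (m + 1) x).mul (hexp x)
    rw [show (dphiS n (m + 1) x + x * phiS n (m + 1) x) * Complex.exp ((x : ℂ) ^ 2 / 2) =
      dphiS n (m + 1) x * Complex.exp ((x : ℂ) ^ 2 / 2) +
        phiS n (m + 1) x * (Complex.exp ((x : ℂ) ^ 2 / 2) * x) by ring]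
    exact h
  have hnorm : ∀ x : ℝ, ‖Complex.exp ((x : ℂ) ^ 2 / 2)‖ = Real.exp (x ^ 2 / 2) := by
    intro x
    rw [Complex.norm_exp]; congr 1
    rw [show ((x : ℂ) ^ 2 / 2) = ((x ^ 2 / 2 : ℝ) : ℂ) by push_cast; rfl, Complex.ofReal_re]
  have hmv : ‖g t - g 0‖ ≤ (B * Real.exp (t ^ 2 / 2)) * ‖t - 0‖ := by
    refine Convex.norm_image_sub_le_of_norm_hasDerivWithin_le
      (s := Set.uIcc 0 t) (f := g) (fun x hx => (hg x).hasDerivWithinAt) ?_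
      (convex_uIcc 0 t) Set.left_mem_uIcc Set.right_mem_uIcc
    intro x hx
    have hxt : |x| ≤ |t| := by simpa using Set.abs_sub_left_of_mem_uIcc hx
    rw [norm_mul, hnorm]
    have h2 : x ^ 2 ≤ t ^ 2 := sq_le_sq.2 hxt
    refine mul_le_mul ((dphiS_bound hn hm x).trans ?_) ?_ (by positivity) (by positivity)
    · rw [hB]; gcongr
    · exact Real.exp_le_exp.2 (by linarith)
  have hg0 : g 0 = 1 := by
    simp only [g, phiS]
    have : (fun z : Fin n → ℕ => chr (0 * ((SS z - meanS n (m + 1)) / sdS n (m + 1)))) =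
        fun _ => (1 : ℂ) := by ext z; simp [chr]
    rw [this, EE_const hn]; simp
  have hfac : phiS n (m + 1) t - Complex.exp (-(t : ℂ) ^ 2 / 2) =
      (g t - g 0) * Complex.exp (-(t : ℂ) ^ 2 / 2) := by
    rw [hg0, sub_mul, one_mul]
    simp only [g]
    rw [mul_assoc, ← Complex.exp_add, show (t : ℂ) ^ 2 / 2 + -(t : ℂ) ^ 2 / 2 = 0 by ring]
    simp
  have hn2 : ‖Complex.exp (-(t : ℂ) ^ 2 / 2)‖ = Real.exp (-(t ^ 2 / 2)) := by
    rw [Complex.norm_exp]; congr 1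
    rw [show (-(t : ℂ) ^ 2 / 2) = ((-(t ^ 2 / 2) : ℝ) : ℂ) by push_cast; ring, Complex.ofReal_re]
  rw [hfac, norm_mul, hn2]
  calc ‖g t - g 0‖ * Real.exp (-(t ^ 2 / 2))
      ≤ (B * Real.exp (t ^ 2 / 2)) * ‖t - 0‖ * Real.exp (-(t ^ 2 / 2)) := by gcongr
    _ = B * |t| * (Real.exp (t ^ 2 / 2) * Real.exp (-(t ^ 2 / 2))) := by
      rw [sub_zero, Real.norm_eq_abs]; ring
    _ = B * |t| := by rw [← Real.exp_add]; simp

/-! ### The likelihood ratio and its second moment -/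

/-- The likelihood ratio `PL_a / ST`, in closed form `n^k / (m)_k · ∏ (z_i)_{a_i}` where `k = ∑ a_i`.
It vanishes when some `z_i < a_i`. -/
noncomputable def LR (n m : ℕ) (a z : Fin n → ℕ) : ℝ :=
  (n : ℝ) ^ (∑ i, a i) / (m.descFactorial (∑ i, a i) : ℝ) * dfac a z

lemma plProb_eq {n m : ℕ} (hn : 0 < n) (a : Fin n → ℕ) (z : Fin n → ℕ) (ha : ∑ i, a i ≤ m) :
    plProb n m a z = stProb n m z * LR n m a z := by
  have hn0 : (n : ℝ) ≠ 0 := by positivity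
  by_cases hz : ∑ i, z i = m
  swap
  · simp [plProb, stProb_zero hz, hz]
  by_cases hle : ∀ i, a i ≤ z i
  · have hza : z = (fun i => z i - a i) + a := by
      ext i; simp [Nat.sub_add_cancel (hle i)]
    have hw : ∑ i, (fun i => z i - a i) i + ∑ i, a i = m := by
      rw [← Finset.sum_add_distrib, ← hz]
      exact Finset.sum_congr rfl fun i _ => Nat.sub_add_cancel (hle i)
    have h := stProb_add hn a (fun i => z i - a i) hw
    rw [← hza] at h
    have hd : ((m.descFactorial (∑ i, a i) : ℕ) : ℝ) ≠ 0 := by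
      exact_mod_cast (Nat.descFactorial_pos.2 ha).ne'
    have h2 : ∑ i, (z i - a i) = m - ∑ i, a i := by
      have : ∑ i, (z i - a i) + ∑ i, a i = m := hw
      omega
    have : stProb n m z * LR n m a z = (n : ℝ) ^ (∑ i, a i) / (m.descFactorial (∑ i, a i) : ℝ) *
      (stProb n m z * dfac a z) := by unfold LR; ring
    rw [this, h, stProb_eq h2]
    have h3 : (n : ℝ) ^ (∑ i, a i) * (n : ℝ)⁻¹ ^ (∑ i, a i) = 1 := by
      rw [← mul_pow, mul_inv_cancel₀ hn0, one_pow]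
    unfold plProb
    rw [if_pos ⟨hz, hle⟩]
    set D : ℝ := (m.descFactorial (∑ i, a i) : ℝ)
    set X := ((Nat.factorial (m - ∑ i, a i) : ℝ) / ∏ i, (Nat.factorial (z i - a i) : ℝ)) *
      ((n : ℝ))⁻¹ ^ (m - ∑ i, a i)
    rw [show (n : ℝ) ^ (∑ i, a i) / D * (D * (n : ℝ)⁻¹ ^ (∑ i, a i) * X) =
      ((n : ℝ) ^ (∑ i, a i) * (n : ℝ)⁻¹ ^ (∑ i, a i)) * (D / D) * X by ring, h3, div_self hd]
    ring
  · rw [plProb, if_neg (by tauto)]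
    push Not at hle
    obtain ⟨i, hi⟩ := hle
    have : dfac a z = 0 :=
      Finset.prod_eq_zero (Finset.mem_univ i) (by exact_mod_cast Nat.descFactorial_eq_zero_iff_lt.2 hi)
    simp [LR, this]

lemma tvDist_eq {n m : ℕ} (hn : 0 < n) (a : Fin n → ℕ) (ha : ∑ i, a i ≤ m) :
    tvDist n m a = 1 / 2 * EE n m (fun z => |1 - LR n m a z|) := by
  unfold tvDist
  congr 1
  rw [tsum_eq_sum_conf (m := m)]
  · unfold EE
    refine Finset.sum_congr rfl fun z _ => ?_
    rw [plProb_eq hn a z ha, smul_eq_mul, ← mul_one_sub, abs_mul, abs_of_nonneg (stProb_nonneg _ _ _)]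
  · intro z hz
    simp [plProb, stProb_zero hz, hz]

/-- Change of measure: reweighting by the likelihood ratio gives the planted distribution. -/
lemma EE_LR {E : Type*} [AddCommGroup E] [Module ℝ E] {n m : ℕ} (hn : 0 < n) (a : Fin n → ℕ)
    (ha : ∑ i, a i ≤ m) (F : (Fin n → ℕ) → E) :
    EE n m (fun z => LR n m a z • F z) = EE n (m - ∑ i, a i) (fun w => F (w + a)) := by
  have hn0 : (n : ℝ) ≠ 0 := by positivity
  have hd : ((m.descFactorial (∑ i, a i) : ℕ) : ℝ) ≠ 0 := by
    exact_mod_cast (Nat.descFactorial_pos.2 ha).ne'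
  have : (fun z => LR n m a z • F z) = fun z =>
      ((n : ℝ) ^ (∑ i, a i) / (m.descFactorial (∑ i, a i) : ℝ)) • (dfac a z • F z) := by
    ext z; rw [smul_smul]; rfl
  rw [this, EE_smul, EE_shift hn a ha, smul_smul]
  convert one_smul ℝ _ using 2
  rw [inv_pow]; field_simp

/-- Vandermonde convolution for falling factorials. -/
lemma descFactorial_add_self (a y : ℕ) : ((y + a).descFactorial a : ℝ) =
    ∑ j ∈ Finset.range (a + 1), ((j.factorial : ℝ) * (a.choose j : ℝ) ^ 2) *
      (y.descFactorial (a - j) : ℝ) := by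
  rw [add_comm y a, Nat.descFactorial_eq_factorial_mul_choose, Nat.add_choose_eq,
    Finset.Nat.sum_antidiagonal_eq_sum_range_succ_mk]
  push_cast
  rw [Finset.mul_sum]
  refine Finset.sum_congr rfl fun j hj => ?_
  have hj : j ≤ a := by simpa [Nat.lt_succ_iff] using hj
  rw [Nat.descFactorial_eq_factorial_mul_choose y]
  have := Nat.choose_mul_factorial_mul_factorial hj
  have h2 : ((a.choose j : ℝ) * j.factorial * (a - j).factorial) = a.factorial := by
    exact_mod_cast this
  rw [← h2]; push_cast; ring

/-- Exact second moment of the likelihood ratio; `p i` counts the coincidences in bin `i` between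
two independent copies of the planting. -/
lemma EE_LR_sq {n m : ℕ} (hn : 0 < n) (a : Fin n → ℕ) (ha : 2 * ∑ i, a i ≤ m) :
    EE n m (fun z => LR n m a z ^ 2) =
      ∑ p ∈ Fintype.piFinset (fun i => Finset.range (a i + 1)),
        (∏ i, ((p i).factorial : ℝ) * ((a i).choose (p i) : ℝ) ^ 2) *
          ((n : ℝ) ^ (∑ i, p i) * ((m - ∑ i, a i).descFactorial (∑ i, a i - ∑ i, p i) : ℝ) /
            (m.descFactorial (∑ i, a i) : ℝ)) := by
  have hn0 : (n : ℝ) ≠ 0 := by positivity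
  have h1 : EE n m (fun z => LR n m a z ^ 2) =
      EE n (m - ∑ i, a i) (fun w => LR n m a (w + a)) := by
    rw [← EE_LR hn a (by omega)]; simp only [smul_eq_mul, sq]
  have h2 : (fun w => LR n m a (w + a)) = fun w =>
      ∑ p ∈ Fintype.piFinset (fun i => Finset.range (a i + 1)),
        ((n : ℝ) ^ (∑ i, a i) / (m.descFactorial (∑ i, a i) : ℝ) *
          ∏ i, ((p i).factorial : ℝ) * ((a i).choose (p i) : ℝ) ^ 2) •
            (dfac (fun i => a i - p i) w • (1 : ℝ)) := by
    ext w
    unfold LR dfac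
    simp only [Pi.add_apply, descFactorial_add_self]
    rw [Finset.prod_univ_sum, Finset.mul_sum]
    refine Finset.sum_congr rfl fun p _ => ?_
    rw [Finset.prod_mul_distrib]
    simp only [smul_eq_mul, mul_one]; ring
  rw [h1, h2, EE_sum]
  refine Finset.sum_congr rfl fun p hp => ?_
  have hp' : ∀ i, p i ≤ a i := by
    intro i
    have := Fintype.mem_piFinset.1 hp i
    simpa [Nat.lt_succ_iff] using this
  have hs : ∑ i, (a i - p i) = ∑ i, a i - ∑ i, p i := Finset.sum_tsub_distrib _ fun i _ => hp' i
  have hple : ∑ i, p i ≤ ∑ i, a i := Finset.sum_le_sum fun i _ => hp' i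
  rw [EE_smul, EE_shift hn _ (by rw [hs]; omega), EE_const hn, hs]
  have hpow : (n : ℝ) ^ (∑ i, a i) = (n : ℝ) ^ (∑ i, p i) * (n : ℝ) ^ (∑ i, a i - ∑ i, p i) := by
    rw [← pow_add]; congr 1; omega
  rw [hpow, inv_pow]
  simp only [smul_eq_mul, mul_one]
  field_simp

/-- The Poisson weights `M^N / N!` are largest at `N = ⌊M⌋`. -/
lemma pow_div_factorial_le {M : ℝ} (hM : 0 < M) (N : ℕ) :
    M ^ N / N.factorial ≤ M ^ ⌊M⌋₊ / (⌊M⌋₊).factorial := by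
  rcases le_total N ⌊M⌋₊ with h | h
  · induction h using Nat.decreasingInduction with
    | self => exact le_rfl
    | of_succ k hk ih =>
      refine le_trans ?_ ih
      have hkM : (k : ℝ) + 1 ≤ M := by
        have : ((k + 1 : ℕ) : ℝ) ≤ M := (Nat.cast_le.2 hk).trans (Nat.floor_le hM.le)
        exact_mod_cast this
      rw [div_le_div_iff₀ (by positivity) (by positivity), Nat.factorial_succ, pow_succ]
      push_cast
      have : 0 < M ^ k * (k.factorial : ℝ) := by positivity
      nlinarith
  · induction N, h using Nat.le_induction with
    | base => exact le_rfl
    | succ k hk ih =>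
      refine le_trans ?_ ih
      have hkM : M ≤ (k : ℝ) + 1 := by
        have := Nat.lt_floor_add_one M
        have h2 : ((⌊M⌋₊ : ℕ) : ℝ) ≤ k := Nat.cast_le.2 hk
        linarith
      rw [div_le_div_iff₀ (by positivity) (by positivity), Nat.factorial_succ, pow_succ]
      push_cast
      have : 0 < M ^ k * (k.factorial : ℝ) := by positivity
      nlinarith

lemma pow_div_factorial_le_exp {M : ℝ} (hM : 1 ≤ M) (N : ℕ) :
    M ^ N / N.factorial ≤ Real.exp M / Real.sqrt (2 * Real.pi * ⌊M⌋₊) := by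
  refine (pow_div_factorial_le (by linarith) N).trans ?_
  set F := ⌊M⌋₊ with hF
  have hF1 : 1 ≤ F := by rw [hF]; exact Nat.le_floor (by exact_mod_cast hM)
  have hF0 : (0 : ℝ) < F := by exact_mod_cast hF1
  have hst := Stirling.le_factorial_stirling F
  have hpos : 0 < Real.sqrt (2 * Real.pi * F) := by positivity
  have h1 : M ^ F ≤ Real.exp M * (F / Real.exp 1) ^ F := by
    have h2 : M / F ≤ Real.exp (M / F - 1) := by
      have := Real.add_one_le_exp (M / F - 1); linarith
    have h3 : (M / F) ^ F ≤ Real.exp (M - F) := by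
      calc (M / F) ^ F ≤ Real.exp (M / F - 1) ^ F := by gcongr
        _ = Real.exp (M - F) := by rw [← Real.exp_nat_mul]; congr 1; field_simp
    have h4 : M ^ F = (M / F) ^ F * (F : ℝ) ^ F := by rw [← mul_pow]; congr 1; field_simp
    have h5 : Real.exp M * (F / Real.exp 1) ^ F = Real.exp (M - F) * (F : ℝ) ^ F := by
      rw [div_pow, ← Real.exp_nat_mul, mul_one, Real.exp_sub]; field_simp
    rw [h4, h5]; gcongr
  rw [div_le_div_iff₀ (by positivity) hpos]
  calc M ^ F * Real.sqrt (2 * Real.pi * F)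
      ≤ Real.exp M * (F / Real.exp 1) ^ F * Real.sqrt (2 * Real.pi * F) := by gcongr
    _ = Real.exp M * (Real.sqrt (2 * Real.pi * F) * (F / Real.exp 1) ^ F) := by ring
    _ ≤ _ := by gcongr

/-- The Stirling correction factor in the bound on the second moment; it tends to `1`. -/
noncomputable def Rfac (m k : ℕ) : ℝ :=
  Stirling.stirlingSeq (m - k) ^ 2 / Real.pi *
    Real.sqrt ((((m - k : ℕ) : ℝ) ^ 2 / m) / ⌊((m - k : ℕ) : ℝ) ^ 2 / m⌋₊)

/-- Bounds the ratio of falling factorials in the second moment by an expression that is geometric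
in the total number `J` of coincidences, so that the sum over coincidences factorises over the bins.
The uniform bound on Poisson weights with mean `(m - k)² / m` supplies the sharp constant. -/
lemma ratio_bound {m k J : ℕ} (hk : 2 * k ≤ m) (hJ : J ≤ k)
    (hM : 1 ≤ ((m - k : ℕ) : ℝ) ^ 2 / m) :
    ((m - k).descFactorial (k - J) : ℝ) / (m.descFactorial k : ℝ) *
      (((m - k : ℕ) : ℝ) ^ 2 / m) ^ J ≤
      Rfac m k * (Real.exp ((k : ℝ) ^ 2 / m) * (((m - k : ℕ) : ℝ) / m) ^ (2 * k)) := by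
  obtain ⟨q, rfl⟩ : ∃ q, m = q + 2 * k := ⟨m - 2 * k, by omega⟩
  unfold Rfac
  have hp : q + 2 * k - k = q + k := by omega
  rw [hp] at hM ⊢
  set p := q + k with hpdef
  set m := q + 2 * k with hmdef
  set M : ℝ := (p : ℝ) ^ 2 / m with hMdef
  have hm0 : (0 : ℝ) < m := by
    rcases Nat.eq_zero_or_pos m with h | h
    · simp [hMdef, h] at hM; linarith
    · exact_mod_cast h
  have hp0 : (0 : ℝ) < p := by
    rcases Nat.eq_zero_or_pos p with h | h
    · simp [hMdef, h] at hM; linarith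
    · exact_mod_cast h
  have hM0 : 0 < M := by linarith
  set F := ⌊M⌋₊ with hF
  have hF1 : 1 ≤ F := by rw [hF]; exact Nat.le_floor (by exact_mod_cast hM)
  have hF0 : (0 : ℝ) < F := by exact_mod_cast hF1
  have hA := pow_div_factorial_le_exp hM (q + J)
  have hst := Stirling.le_factorial_stirling m
  have e1 : ((m.descFactorial k : ℕ) : ℝ) = m.factorial / p.factorial := by
    have := Nat.factorial_mul_descFactorial (show k ≤ m by omega)
    rw [show m - k = p by omega] at this
    rw [eq_div_iff (by positivity), mul_comm]; exact_mod_cast this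
  have e2 : ((p.descFactorial (k - J) : ℕ) : ℝ) = p.factorial / (q + J).factorial := by
    have := Nat.factorial_mul_descFactorial (show k - J ≤ p by omega)
    rw [show p - (k - J) = q + J by omega] at this
    rw [eq_div_iff (by positivity), mul_comm]; exact_mod_cast this
  have e3 : (p.factorial : ℝ) = Stirling.stirlingSeq p * (Real.sqrt (2 * p) * (p / Real.exp 1) ^ p) := by
    unfold Stirling.stirlingSeq; field_simp
  set S := Stirling.stirlingSeq p with hS
  have hS0 : 0 ≤ S := by rw [hS]; unfold Stirling.stirlingSeq; positivity
  have e4 : M ^ J = M ^ (q + J) / M ^ q := by rw [pow_add]; field_simp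
  calc ((p.descFactorial (k - J) : ℕ) : ℝ) / (m.descFactorial k : ℕ) * M ^ J
      = (p.factorial : ℝ) ^ 2 / m.factorial * (M ^ (q + J) / (q + J).factorial) / M ^ q := by
        rw [e1, e2, e4]; field_simp
    _ ≤ (p.factorial : ℝ) ^ 2 / (Real.sqrt (2 * Real.pi * m) * (m / Real.exp 1) ^ m) *
        (Real.exp M / Real.sqrt (2 * Real.pi * F)) / M ^ q := by gcongr
    _ = (S ^ 2 * (2 * p) / (Real.sqrt (2 * Real.pi * m) * Real.sqrt (2 * Real.pi * F))) *
        (((p / Real.exp 1) ^ p) ^ 2 * Real.exp M / ((m / Real.exp 1) ^ m * M ^ q)) := by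
        rw [e3, mul_pow, mul_pow, Real.sq_sqrt (by positivity)]
        field_simp
    _ = _ := by
      congr 1
      · have h1 : Real.sqrt (2 * Real.pi * m) * Real.sqrt (2 * Real.pi * F) =
            2 * Real.pi * (Real.sqrt m * Real.sqrt F) := by
          rw [Real.sqrt_mul (show (0 : ℝ) ≤ 2 * Real.pi by positivity) m,
            Real.sqrt_mul (show (0 : ℝ) ≤ 2 * Real.pi by positivity) F]
          have := Real.mul_self_sqrt (show 0 ≤ 2 * Real.pi by positivity)
          linear_combination (Real.sqrt m * Real.sqrt F) * this
        rw [h1, Real.sqrt_div (by positivity), hMdef, Real.sqrt_div (by positivity),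
          Real.sqrt_sq hp0.le]
        have := Real.pi_pos
        have : 0 < Real.sqrt m := by positivity
        have : 0 < Real.sqrt F := by positivity
        field_simp
      · have hmr : (m : ℝ) = q + 2 * k := by rw [hmdef]; push_cast; ring
        have hpr : (p : ℝ) = q + k := by rw [hpdef]; push_cast; ring
        have h1 : ((p / Real.exp 1) ^ p) ^ 2 = (p : ℝ) ^ (2 * k) * (p : ℝ) ^ (2 * q) /
            Real.exp (2 * p) := by
          rw [← pow_mul, div_pow, ← Real.exp_nat_mul, ← pow_add]
          congr 2
          · rw [hpdef]; ring
          · push_cast; ring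
        have h2 : (m / Real.exp 1) ^ m = (m : ℝ) ^ (2 * k) * (m : ℝ) ^ q / Real.exp m := by
          rw [div_pow, ← Real.exp_nat_mul, ← pow_add, mul_one]
          congr 2
          rw [hmdef]; ring
        have h3 : M ^ q = (p : ℝ) ^ (2 * q) / (m : ℝ) ^ q := by
          rw [hMdef, div_pow, ← pow_mul]
        have h4 : Real.exp ((k : ℝ) ^ 2 / m) = Real.exp m * Real.exp M / Real.exp (2 * p) := by
          rw [← Real.exp_add, ← Real.exp_sub]; congr 1
          have h5 : (k : ℝ) ^ 2 = m * m + p ^ 2 - 2 * p * m := by rw [hmr, hpr]; ring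
          rw [hMdef, h5]; field_simp
        rw [h1, h2, h3, h4, div_pow]
        field_simp

/-- The contribution of a bin with `a` planted balls to the bound on the second moment. -/
noncomputable def Gbin (τ l : ℝ) (a : ℕ) : ℝ :=
  Real.exp (τ * l ^ 2) * ∑ j ∈ Finset.range (a + 1),
    (j.factorial : ℝ) * (a.choose j : ℝ) ^ 2 * τ ^ j * (1 - τ * l) ^ (2 * a - 2 * j)

lemma EE_LR_sq_le {n m k : ℕ} (hn : 0 < n) (a : Fin n → ℕ) (hka : ∑ i, a i = k)
    (hk : 2 * k ≤ m) (hM : 1 ≤ ((m - k : ℕ) : ℝ) ^ 2 / m) :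
    EE n m (fun z => LR n m a z ^ 2) ≤
      Rfac m k * ∏ i, Gbin ((n : ℝ) / m) ((k : ℝ) / n) (a i) := by
  rw [EE_LR_sq hn a (by omega), hka]
  have hn0 : (0 : ℝ) < n := by positivity
  have hm0 : (0 : ℝ) < m := by
    rcases Nat.eq_zero_or_pos m with h | h
    · simp [h] at hM; linarith
    · exact_mod_cast h
  have hp0 : (0 : ℝ) < ((m - k : ℕ) : ℝ) := by
    rcases Nat.eq_zero_or_pos (m - k) with h | h
    · simp [h] at hM; linarith
    · exact_mod_cast h
  set p : ℝ := ((m - k : ℕ) : ℝ) with hp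
  have hpr : p = m - k := by rw [hp, Nat.cast_sub (by omega)]
  have hprod : ∏ i, Gbin ((n : ℝ) / m) ((k : ℝ) / n) (a i) =
      ∑ q ∈ Fintype.piFinset (fun i => Finset.range (a i + 1)),
        (∏ i, ((q i).factorial : ℝ) * ((a i).choose (q i) : ℝ) ^ 2) *
          ((n : ℝ) ^ (∑ i, q i) * (Real.exp ((k : ℝ) ^ 2 / m) * (p / m) ^ (2 * k)) /
            (p ^ 2 / m) ^ (∑ i, q i)) := by
    unfold Gbin
    rw [Finset.prod_mul_distrib, Finset.prod_const, Finset.card_univ, Fintype.card_fin,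
      ← Real.exp_nat_mul, Finset.prod_univ_sum, Finset.mul_sum]
    refine Finset.sum_congr rfl fun q hq => ?_
    have hq' : ∀ i, q i ≤ a i := by
      intro i
      have := Fintype.mem_piFinset.1 hq i
      simpa [Nat.lt_succ_iff] using this
    have hqle : ∑ i, q i ≤ k := hka ▸ Finset.sum_le_sum fun i _ => hq' i
    rw [Finset.prod_mul_distrib, Finset.prod_mul_distrib, Finset.prod_pow_eq_pow_sum,
      Finset.prod_pow_eq_pow_sum]
    have h1 : ∑ i, (2 * a i - 2 * q i) = 2 * k - 2 * ∑ i, q i := by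
      rw [Finset.sum_tsub_distrib _ fun i _ => Nat.mul_le_mul_left 2 (hq' i), ← Finset.mul_sum,
        ← Finset.mul_sum, hka]
    have h2 : (1 - (n : ℝ) / m * (k / n)) = p / m := by rw [hpr]; field_simp
    have h3 : (n : ℝ) * (n / m * (k / n) ^ 2) = (k : ℝ) ^ 2 / m := by field_simp
    rw [h1, h2, h3]
    have h4 : (p / m) ^ (2 * k) = (p / m) ^ (2 * k - 2 * ∑ i, q i) * ((p / m) ^ 2) ^ (∑ i, q i) := by
      rw [← pow_mul, ← pow_add]; congr 1; omega
    rw [h4, show ((n : ℝ) / m) ^ (∑ i, q i) = (n : ℝ) ^ (∑ i, q i) / (p ^ 2 / m) ^ (∑ i, q i) *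
      ((p / m) ^ 2) ^ (∑ i, q i) by
        rw [← div_pow, ← mul_pow]; congr 1; field_simp]
    ring
  rw [hprod, Finset.mul_sum]
  refine Finset.sum_le_sum fun q hq => ?_
  have hqle : ∑ i, q i ≤ k := hka ▸ Finset.sum_le_sum fun i _ => by
    have := Fintype.mem_piFinset.1 hq i
    simpa [Nat.lt_succ_iff] using this
  have hr := ratio_bound hk hqle hM
  rw [← hp] at hr
  have hMp : 0 < (p ^ 2 / m) ^ (∑ i, q i) := by positivity
  rw [← le_div_iff₀ hMp] at hr
  calc _ = (∏ i, ((q i).factorial : ℝ) * ((a i).choose (q i) : ℝ) ^ 2) * ((n : ℝ) ^ (∑ i, q i) *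
        (((m - k).descFactorial (k - ∑ i, q i) : ℝ) / (m.descFactorial k : ℝ))) := by ring
    _ ≤ (∏ i, ((q i).factorial : ℝ) * ((a i).choose (q i) : ℝ) ^ 2) * ((n : ℝ) ^ (∑ i, q i) *
        (Rfac m k * (Real.exp ((k : ℝ) ^ 2 / m) * (p / m) ^ (2 * k)) / (p ^ 2 / m) ^ (∑ i, q i))) := by
        gcongr
    _ = _ := by ring

/-! ### Charlier expansion of the contribution of one bin -/

/-- Charlier coefficients: `Hc l a d` is the coefficient of `w ^ d` in `e^{-l w} (1 + w)^a`. -/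
noncomputable def Hc (l : ℝ) : ℕ → ℕ → ℝ
  | 0, d => (-l) ^ d / d.factorial
  | a + 1, 0 => Hc l a 0
  | a + 1, d + 1 => Hc l a (d + 1) + Hc l a d

lemma Hc_zero_left (l : ℝ) (d : ℕ) : Hc l 0 d = (-l) ^ d / d.factorial := by
  cases d <;> simp [Hc]

lemma Hc_zero_right (l : ℝ) (a : ℕ) : Hc l a 0 = 1 := by
  induction a with
  | zero => simp [Hc]
  | succ a ih => simpa [Hc] using ih

lemma Hc_succ_succ (l : ℝ) (a d : ℕ) : Hc l (a + 1) (d + 1) = Hc l a (d + 1) + Hc l a d := by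
  simp [Hc]

/-- Comparison of the generating function with `e^{(l + a) w}`. -/
lemma abs_Hc_le {l : ℝ} (hl : 0 ≤ l) (a d : ℕ) : |Hc l a d| ≤ (l + a) ^ d / d.factorial := by
  induction a generalizing d with
  | zero =>
    rw [Hc_zero_left, abs_div, abs_pow, abs_neg, abs_of_nonneg hl]
    simp
  | succ a ih =>
    cases d with
    | zero => simp [Hc_zero_right]
    | succ d =>
      rw [Hc_succ_succ]
      refine (abs_add_le _ _).trans ((add_le_add (ih _) (ih _)).trans ?_)
      rw [Nat.factorial_succ]
      push_cast
      set x := l + a with hx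
      have hx0 : 0 ≤ x := by positivity
      have h1 : x ^ (d + 1) + (d + 1) * x ^ d ≤ (x + 1) ^ (d + 1) := by
        clear_value x
        induction d with
        | zero => simp
        | succ d ihd =>
          have h2 := mul_le_mul_of_nonneg_right ihd (show 0 ≤ x + 1 by linarith)
          have h3 : 0 ≤ ((d : ℝ) + 1) * x ^ d := by positivity
          push_cast
          rw [pow_succ (x + 1)]
          refine le_trans ?_ h2
          ring_nf
          ring_nf at h3
          linarith
      rw [show l + ((a : ℝ) + 1) = x + 1 by rw [hx]; ring]
      have hd : (0 : ℝ) < d.factorial := by positivity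
      have e : x ^ (d + 1) / (((d : ℝ) + 1) * d.factorial) + x ^ d / d.factorial =
        (x ^ (d + 1) + (d + 1) * x ^ d) / (((d : ℝ) + 1) * d.factorial) := by field_simp
      rw [e]
      gcongr

/-- Comparison of coefficients in `g' = -l g + b (1 + w)^{b-1} e^{-l w}` for the generating function `g`. -/
lemma Hc_deriv (l : ℝ) (b d : ℕ) :
    ((d : ℝ) + 1) * Hc l b (d + 1) = -l * Hc l b d + b * Hc l (b - 1) d := by
  induction b generalizing d with
  | zero =>
    rw [Hc_zero_left, Hc_zero_left, Nat.factorial_succ]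
    push_cast
    field_simp
    ring
  | succ b ih =>
    rw [Hc_succ_succ, Nat.add_sub_cancel]
    have h1 := ih d
    cases b with
    | zero =>
      cases d with
      | zero => simp [Hc]
      | succ d =>
        have h2 := ih d
        rw [Hc_succ_succ]
        push_cast at *
        linear_combination h1 + h2
    | succ b =>
      cases d with
      | zero =>
        rw [Hc_zero_right] at *
        simp only [Nat.add_sub_cancel, Hc_zero_right] at *
        push_cast at *
        linear_combination h1
      | succ d =>
        have h2 := ih d
        simp only [Nat.add_sub_cancel] at *
        rw [Hc_succ_succ l (b + 1) d]
        have h3 := Hc_succ_succ l b d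
        push_cast at *
        linear_combination h1 + h2 - (b + 1) * h3

/-- Three-term recurrence in the degree. -/
lemma Hc_three (l : ℝ) (a d : ℕ) :
    ((d : ℝ) + 2) * Hc l a (d + 2) =
      (a - l - (d + 1)) * Hc l a (d + 1) - l * Hc l a d := by
  have h1 := Hc_deriv l a (d + 1)
  have h2 := Hc_deriv l a d
  cases a with
  | zero => simp at *; linarith
  | succ b =>
    simp only [Nat.add_sub_cancel] at *
    have h3 := Hc_succ_succ l b d
    push_cast at *
    linear_combination h1 + h2 - (b + 1) * h3

lemma Hc_one (l : ℝ) (a : ℕ) : Hc l a 1 = a - l := by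
  have := Hc_deriv l a 0
  simp [Hc_zero_right] at this
  linarith

lemma Hc_two (l : ℝ) (a : ℕ) : Hc l a 2 = ((a - l) ^ 2 - a) / 2 := by
  have := Hc_three l a 0
  simp [Hc_zero_right, Hc_one] at this
  linarith

lemma summable_Hc {l τ : ℝ} (hl : 0 ≤ l) (a b : ℕ) :
    Summable (fun d : ℕ => (d.factorial : ℝ) * τ ^ d * Hc l a d * Hc l b d) := by
  refine Summable.of_norm_bounded (Real.summable_pow_div_factorial (|τ| * (l + a) * (l + b)))
    fun d => ?_
  rw [Real.norm_eq_abs, abs_mul, abs_mul, abs_mul, abs_pow, Nat.abs_cast]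
  calc (d.factorial : ℝ) * |τ| ^ d * |Hc l a d| * |Hc l b d|
      ≤ d.factorial * |τ| ^ d * ((l + a) ^ d / d.factorial) * ((l + b) ^ d / d.factorial) := by
        gcongr
        · exact abs_Hc_le hl a d
        · exact abs_Hc_le hl b d
    _ = _ := by rw [mul_pow, mul_pow]; field_simp

lemma summable_Hc_pow {l w : ℝ} (hl : 0 ≤ l) (b : ℕ) :
    Summable (fun d : ℕ => w ^ d * Hc l b d) := by
  refine Summable.of_norm_bounded (Real.summable_pow_div_factorial (|w| * (l + b)))
    fun d => ?_
  rw [Real.norm_eq_abs, abs_mul, abs_pow]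
  calc |w| ^ d * |Hc l b d| ≤ |w| ^ d * ((l + b) ^ d / d.factorial) := by
        gcongr; exact abs_Hc_le hl b d
    _ = _ := by rw [mul_pow]; ring

lemma tsum_Hc_pow {l w : ℝ} (hl : 0 ≤ l) (b : ℕ) :
    ∑' d, w ^ d * Hc l b d = Real.exp (-(l * w)) * (1 + w) ^ b := by
  induction b with
  | zero =>
    rw [pow_zero, mul_one, Real.exp_eq_exp_ℝ, NormedSpace.exp_eq_tsum_div]
    refine tsum_congr fun d => ?_
    rw [Hc_zero_left, ← mul_div_assoc, ← mul_pow]; congr 2; ring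
  | succ b ih =>
    have hs := summable_Hc_pow (w := w) hl b
    rw [(summable_Hc_pow hl (b + 1)).tsum_eq_zero_add]
    simp only [Hc_succ_succ]
    have hs1 : Summable (fun d => w ^ (d + 1) * Hc l b (d + 1)) :=
      (summable_nat_add_iff (f := fun d => w ^ d * Hc l b d) 1).2 hs
    have : ∀ d, w ^ (d + 1) * (Hc l b (d + 1) + Hc l b d) =
      w ^ (d + 1) * Hc l b (d + 1) + w * (w ^ d * Hc l b d) := fun d => by ring
    simp only [this]
    rw [hs1.tsum_add (hs.mul_left w), tsum_mul_left, ih, ← add_assoc]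
    have h0 := hs.tsum_eq_zero_add
    rw [ih] at h0
    rw [Hc_zero_right] at h0 ⊢
    rw [← h0]; ring

/-- `Pc u a j = C(a,j) u^{a-j}`. -/
noncomputable def Pc (u : ℝ) (a j : ℕ) : ℝ := (a.choose j : ℝ) * u ^ (a - j)

lemma Pc_succ_succ (u : ℝ) (a j : ℕ) : Pc u (a + 1) (j + 1) = u * Pc u a (j + 1) + Pc u a j := by
  unfold Pc
  rw [Nat.choose_succ_succ, Nat.add_sub_add_right]
  rcases lt_or_ge a (j + 1) with h | h
  · rw [Nat.choose_eq_zero_of_lt h]; simp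
  · rw [show a - j = a - (j + 1) + 1 by omega, pow_succ]; push_cast; ring

lemma Pc_succ_zero (u : ℝ) (a : ℕ) : Pc u (a + 1) 0 = u * Pc u a 0 := by
  simp [Pc, pow_succ]; ring

lemma Pc_mul (u : ℝ) (b j : ℕ) : ((j : ℝ) + 1) * Pc u b (j + 1) = b * Pc u (b - 1) j := by
  unfold Pc
  cases b with
  | zero => simp
  | succ b =>
    rw [Nat.add_sub_add_right, Nat.add_sub_cancel, ← mul_assoc, ← mul_assoc]
    congr 1
    have := Nat.add_one_mul_choose_eq b j
    rw [mul_comm ((j : ℝ) + 1)]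
    exact_mod_cast this.symm

/-- Mehler-type formula for the Charlier coefficients: both sides satisfy the same recurrence
in `a`. -/
lemma mehler {l τ : ℝ} (hl : 0 ≤ l) (a b N : ℕ) (hN : a ≤ N) :
    ∑' d : ℕ, (d.factorial : ℝ) * τ ^ d * Hc l a d * Hc l b d =
      Real.exp (τ * l ^ 2) * ∑ j ∈ Finset.range (N + 1),
        (j.factorial : ℝ) * τ ^ j * Pc (1 - τ * l) a j * Pc (1 - τ * l) b j := by
  induction a generalizing b N with
  | zero =>
    have h1 : ∑ j ∈ Finset.range (N + 1),
        (j.factorial : ℝ) * τ ^ j * Pc (1 - τ * l) 0 j * Pc (1 - τ * l) b j =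
        (1 - τ * l) ^ b := by
      rw [Finset.sum_range_succ']
      simp [Pc]
    have h2 : ∀ d : ℕ, (d.factorial : ℝ) * τ ^ d * Hc l 0 d * Hc l b d =
        (-(τ * l)) ^ d * Hc l b d := by
      intro d
      rw [Hc_zero_left, show -(τ * l) = τ * (-l) by ring, mul_pow]; field_simp
    rw [h1, tsum_congr h2, tsum_Hc_pow hl]
    congr 2; ring
  | succ a ih =>
    obtain ⟨N, rfl⟩ : ∃ N', N = N' + 1 := ⟨N - 1, by omega⟩
    have hs := summable_Hc (τ := τ) hl a b
    have hs' := summable_Hc (τ := τ) hl a (b - 1)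
    have e1 : ∑' d : ℕ, (d.factorial : ℝ) * τ ^ d * Hc l (a + 1) d * Hc l b d =
        (1 - τ * l) * ∑' d : ℕ, (d.factorial : ℝ) * τ ^ d * Hc l a d * Hc l b d +
          τ * b * ∑' d : ℕ, (d.factorial : ℝ) * τ ^ d * Hc l a d * Hc l (b - 1) d := by
      rw [(summable_Hc hl (a + 1) b).tsum_eq_zero_add]
      have h : ∀ d : ℕ, ((d + 1).factorial : ℝ) * τ ^ (d + 1) * Hc l (a + 1) (d + 1) * Hc l b (d + 1)
        = ((d + 1).factorial : ℝ) * τ ^ (d + 1) * Hc l a (d + 1) * Hc l b (d + 1) +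
          ((-(τ * l)) * ((d.factorial : ℝ) * τ ^ d * Hc l a d * Hc l b d) +
            τ * b * ((d.factorial : ℝ) * τ ^ d * Hc l a d * Hc l (b - 1) d)) := by
        intro d
        rw [Hc_succ_succ, Nat.factorial_succ]
        have := Hc_deriv l b d
        push_cast
        rw [pow_succ]
        linear_combination (d.factorial : ℝ) * τ ^ d * τ * Hc l a d * this
      rw [tsum_congr h]
      have hs1 : Summable (fun d : ℕ =>
          ((d + 1).factorial : ℝ) * τ ^ (d + 1) * Hc l a (d + 1) * Hc l b (d + 1)) :=
        (summable_nat_add_iff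
          (f := fun d : ℕ => (d.factorial : ℝ) * τ ^ d * Hc l a d * Hc l b d) 1).2 hs
      rw [hs1.tsum_add ((hs.mul_left _).add (hs'.mul_left _)),
        (hs.mul_left _).tsum_add (hs'.mul_left _), tsum_mul_left, tsum_mul_left]
      have h0 := hs.tsum_eq_zero_add
      simp only [Hc_zero_right] at h0 ⊢
      linear_combination -h0
    have e2 : ∑ j ∈ Finset.range (N + 1 + 1),
        (j.factorial : ℝ) * τ ^ j * Pc (1 - τ * l) (a + 1) j * Pc (1 - τ * l) b j =
        (1 - τ * l) * ∑ j ∈ Finset.range (N + 1 + 1),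
        (j.factorial : ℝ) * τ ^ j * Pc (1 - τ * l) a j * Pc (1 - τ * l) b j +
        τ * b * ∑ j ∈ Finset.range (N + 1),
        (j.factorial : ℝ) * τ ^ j * Pc (1 - τ * l) a j * Pc (1 - τ * l) (b - 1) j := by
      rw [Finset.sum_range_succ', Finset.sum_range_succ' _ (N + 1), mul_add, Finset.mul_sum,
        Finset.mul_sum, Pc_succ_zero]
      have h : ∀ j : ℕ, ((j + 1).factorial : ℝ) * τ ^ (j + 1) * Pc (1 - τ * l) (a + 1) (j + 1) *
          Pc (1 - τ * l) b (j + 1) =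
          (1 - τ * l) * (((j + 1).factorial : ℝ) * τ ^ (j + 1) * Pc (1 - τ * l) a (j + 1) *
          Pc (1 - τ * l) b (j + 1)) + τ * b * ((j.factorial : ℝ) * τ ^ j * Pc (1 - τ * l) a j *
            Pc (1 - τ * l) (b - 1) j) := by
        intro j
        rw [Pc_succ_succ, Nat.factorial_succ]
        have := Pc_mul (1 - τ * l) b j
        push_cast
        rw [pow_succ]
        linear_combination (j.factorial : ℝ) * τ ^ j * τ * Pc (1 - τ * l) a j * this
      rw [Finset.sum_congr rfl fun j _ => h j, Finset.sum_add_distrib]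
      ring
    rw [e1, e2, ih b (N + 1) (by omega), ih (b - 1) N (by omega)]
    ring

/-- The contribution of a bin, expanded in Charlier coefficients. -/
lemma Gbin_eq {l τ : ℝ} (hl : 0 ≤ l) (a : ℕ) :
    Gbin τ l a = ∑' d : ℕ, (d.factorial : ℝ) * τ ^ d * Hc l a d * Hc l a d := by
  rw [mehler hl a a a le_rfl]
  unfold Gbin
  congr 1
  refine Finset.sum_congr rfl fun j _ => ?_
  unfold Pc
  rw [show 2 * a - 2 * j = (a - j) * 2 by omega, pow_mul]
  ring

/-- Normalised Charlier coefficients. -/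
noncomputable def bc (l : ℝ) (a d : ℕ) : ℝ := Real.sqrt d.factorial / Real.sqrt l ^ d * Hc l a d

lemma bc_three {l : ℝ} (hl : 0 < l) (a d : ℕ) : Real.sqrt (d + 2) * bc l a (d + 2) =
    (a - l - (d + 1)) / Real.sqrt l * bc l a (d + 1) - Real.sqrt (d + 1) * bc l a d := by
  have h := Hc_three l a d
  unfold bc
  have h1 : Real.sqrt ((d + 1).factorial : ℝ) = Real.sqrt (d + 1) * Real.sqrt d.factorial := by
    rw [Nat.factorial_succ, Nat.cast_mul, Real.sqrt_mul (by positivity)]; push_cast; rfl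
  have h2 : Real.sqrt ((d + 2).factorial : ℝ) =
      Real.sqrt (d + 2) * Real.sqrt ((d + 1).factorial : ℝ) := by
    rw [Nat.factorial_succ (d + 1), Nat.cast_mul, Real.sqrt_mul (by positivity)]; push_cast
    rw [show (d : ℝ) + 1 + 1 = d + 2 by ring]
  rw [h2, h1]
  have hs : 0 < Real.sqrt l := Real.sqrt_pos.2 hl
  have hss : Real.sqrt l ^ 2 = l := Real.sq_sqrt hl.le
  have q1 : Real.sqrt ((d : ℝ) + 2) ^ 2 = d + 2 := Real.sq_sqrt (by positivity)
  rw [pow_succ (Real.sqrt l) (d + 1), pow_succ (Real.sqrt l) d]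
  field_simp
  rw [q1, hss]
  linear_combination h

/-- The three-term recurrence controls the normalised coefficients in degrees up to `l + 1`; for
larger degrees its coefficients are no longer bounded. -/
lemma bc_bound_small {l : ℝ} (hl : 0 < l) (a d : ℕ) (hd : (d : ℝ) ≤ l) :
    |bc l a d| ≤ (|a - l| / Real.sqrt l + 2) ^ d ∧
      |bc l a (d + 1)| ≤ (|a - l| / Real.sqrt l + 2) ^ (d + 1) := by
  have hs : 0 < Real.sqrt l := Real.sqrt_pos.2 hl
  induction d with
  | zero =>
    refine ⟨by simp [bc, Hc_zero_right], ?_⟩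
    simp only [bc, Hc_one, Nat.factorial, zero_add, pow_one]
    simp [abs_mul, abs_of_pos hs]
    rw [div_eq_inv_mul]; linarith
  | succ d ih =>
    have hd' : (d : ℝ) + 1 ≤ l := by exact_mod_cast hd
    obtain ⟨h1, h2⟩ := ih (by linarith)
    refine ⟨h2, ?_⟩
    set C := |a - l| / Real.sqrt l + 2 with hC
    have hX : 0 ≤ |a - l| / Real.sqrt l := by positivity
    have h3 := bc_three hl a d
    have h4 : Real.sqrt ((d : ℝ) + 2) * |bc l a (d + 2)| ≤
        (|a - l| / Real.sqrt l + ((d : ℝ) + 1) / Real.sqrt l) * |bc l a (d + 1)| +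
          Real.sqrt (d + 1) * |bc l a d| := by
      rw [← abs_of_nonneg (Real.sqrt_nonneg ((d : ℝ) + 2)), ← abs_mul, h3]
      refine (abs_sub _ _).trans ?_
      rw [abs_mul, abs_mul, abs_div, abs_of_pos hs, abs_of_nonneg (Real.sqrt_nonneg _), ← add_div]
      gcongr
      refine (abs_sub _ _).trans ?_
      rw [abs_of_nonneg (show (0 : ℝ) ≤ (d : ℝ) + 1 by positivity)]
    have hq1 : 1 ≤ Real.sqrt ((d : ℝ) + 2) := by rw [Real.one_le_sqrt]; linarith [(Nat.cast_nonneg d : (0 : ℝ) ≤ d)]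
    have hq2 : Real.sqrt ((d : ℝ) + 1) ≤ Real.sqrt ((d : ℝ) + 2) := Real.sqrt_le_sqrt (by linarith)
    have hq3 : ((d : ℝ) + 1) / Real.sqrt l ≤ Real.sqrt ((d : ℝ) + 2) := by
      refine le_trans ?_ hq2
      rw [div_le_iff₀ hs, ← Real.sqrt_mul (by positivity)]
      refine Real.le_sqrt_of_sq_le ?_
      rw [sq]; gcongr
    set q := Real.sqrt ((d : ℝ) + 2)
    have h5 : q * |bc l a (d + 2)| ≤ q * C ^ (d + 2) := by
      refine h4.trans ?_
      calc _ ≤ (|a - l| / Real.sqrt l * q + q) * C ^ (d + 1) + q * C ^ d := by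
            gcongr
            exact le_mul_of_one_le_right hX hq1
        _ ≤ q * C ^ (d + 2) := by
            have : q * C ^ (d + 2) - ((|a - l| / Real.sqrt l * q + q) * C ^ (d + 1) + q * C ^ d) =
              q * C ^ d * (|a - l| / Real.sqrt l + 1) := by rw [hC]; ring
            have h0 : 0 ≤ q * C ^ d * (|a - l| / Real.sqrt l + 1) := by positivity
            linarith
    exact le_of_mul_le_mul_left h5 (by linarith)

lemma pow_self_le (d : ℕ) : (d : ℝ) ^ d ≤ 3 ^ d * d.factorial := by
  have h := Real.pow_div_factorial_le_exp (d : ℝ) (by positivity) d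
  rw [div_le_iff₀ (by positivity)] at h
  refine h.trans ?_
  gcongr
  have : Real.exp (d : ℝ) = Real.exp 1 ^ d := by rw [← Real.exp_nat_mul, mul_one]
  rw [this]
  gcongr
  linarith [Real.exp_one_lt_d9]

/-- Geometric bound in all degrees: `bc_bound_small` for `d ≤ l`, the crude bound `abs_Hc_le` for
`d > l`. -/
lemma hc_bound {l : ℝ} (hl : 1 / 2 ≤ l) (a d : ℕ) :
    (d.factorial : ℝ) / l ^ d * Hc l a d ^ 2 ≤ (24 * (1 + (a - l) ^ 2 / l)) ^ d := by
  have hl0 : 0 < l := by linarith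
  have hs : 0 < Real.sqrt l := Real.sqrt_pos.2 hl0
  rcases le_or_gt (d : ℝ) l with h | h
  · have h1 := (bc_bound_small hl0 a d h).1
    have h2 : (d.factorial : ℝ) / l ^ d * Hc l a d ^ 2 = |bc l a d| ^ 2 := by
      rw [sq_abs]; unfold bc
      rw [mul_pow, div_pow, Real.sq_sqrt (by positivity), ← pow_mul, mul_comm d 2, pow_mul,
        Real.sq_sqrt hl0.le]
    have h3 : (|a - l| / Real.sqrt l + 2) ^ 2 ≤ 24 * (1 + (a - l) ^ 2 / l) := by
      have : (a - l) ^ 2 / l = (|a - l| / Real.sqrt l) ^ 2 := by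
        rw [div_pow, sq_abs, Real.sq_sqrt hl0.le]
      rw [this]
      nlinarith [sq_nonneg (|a - l| / Real.sqrt l - 2), sq_nonneg (|a - l| / Real.sqrt l)]
    rw [h2]
    calc |bc l a d| ^ 2 ≤ ((|a - l| / Real.sqrt l + 2) ^ d) ^ 2 := by gcongr
      _ = ((|a - l| / Real.sqrt l + 2) ^ 2) ^ d := by rw [← pow_mul, ← pow_mul, mul_comm]
      _ ≤ _ := by gcongr
  · have h1 := abs_Hc_le hl0.le a d
    have h2 : Hc l a d ^ 2 ≤ ((l + a) ^ d / d.factorial) ^ 2 := by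
      rw [← sq_abs]; gcongr
    have h3 : (l + a) ^ 2 / l ^ 2 ≤ 8 * (1 + (a - l) ^ 2 / l) := by
      have e1 : (l + a) ^ 2 / l ^ 2 = (2 + (a - l) / l) ^ 2 := by
        rw [← div_pow]; congr 1; field_simp; ring
      have e2 : ((a - l) / l) ^ 2 ≤ 2 * ((a - l) ^ 2 / l) := by
        rw [div_pow, div_le_iff₀ (by positivity)]
        have : 2 * ((a - l) ^ 2 / l) * l ^ 2 = (a - l) ^ 2 * (2 * l) := by field_simp
        rw [this]
        exact le_mul_of_one_le_right (sq_nonneg _) (by linarith)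
      rw [e1]
      nlinarith [sq_nonneg ((a - l) / l - 2)]
    calc (d.factorial : ℝ) / l ^ d * Hc l a d ^ 2
        ≤ d.factorial / l ^ d * ((l + a) ^ d / d.factorial) ^ 2 := by gcongr
      _ = l ^ d / d.factorial * ((l + a) ^ 2 / l ^ 2) ^ d := by
        rw [div_pow, div_pow, ← pow_mul, ← pow_mul, ← pow_mul, mul_comm 2 d, pow_mul l d 2]
        field_simp
      _ ≤ (d : ℝ) ^ d / d.factorial * (8 * (1 + (a - l) ^ 2 / l)) ^ d := by gcongr
      _ ≤ 3 ^ d * (8 * (1 + (a - l) ^ 2 / l)) ^ d := by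
        gcongr
        rw [div_le_iff₀ (by positivity)]; exact pow_self_le d
      _ = _ := by rw [← mul_pow]; congr 1; ring

/-- Second-order expansion of the contribution of one bin. -/
lemma Gbin_le {l τ : ℝ} (hl : 1 / 2 ≤ l) (hτ : 0 ≤ τ) (a : ℕ)
    (hX : 24 * (τ * l) * (1 + (a - l) ^ 2 / l) ≤ 1 / 2) :
    Gbin τ l a ≤ 1 + τ * l * ((a - l) ^ 2 / l) + (τ * l) ^ 2 * (1 / 2 + (a - l) / l +
      ((a - l) ^ 2 / l) ^ 2 + 2 * ((a - l) ^ 2 / l)) +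
      2 * (24 * (τ * l) * (1 + (a - l) ^ 2 / l)) ^ 3 := by
  have hl0 : 0 < l := by linarith
  rw [Gbin_eq hl0.le]
  have hs := summable_Hc (τ := τ) hl0.le a a
  set f : ℕ → ℝ := fun d => (d.factorial : ℝ) * τ ^ d * Hc l a d * Hc l a d with hf
  set Y := 24 * (τ * l) * (1 + (a - l) ^ 2 / l) with hY
  have hY0 : 0 ≤ Y := by positivity
  have hfd : ∀ d, f d = (τ * l) ^ d * ((d.factorial : ℝ) / l ^ d * Hc l a d ^ 2) := by
    intro d; rw [hf, mul_pow]; field_simp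
  have hfY : ∀ d, f d ≤ Y ^ d := by
    intro d
    rw [hfd, show Y = (τ * l) * (24 * (1 + (a - l) ^ 2 / l)) by rw [hY]; ring, mul_pow (τ * l)]
    gcongr
    exact hc_bound hl a d
  rw [← hs.sum_add_tsum_nat_add 3]
  have htail : ∑' i, f (i + 3) ≤ 2 * Y ^ 3 := by
    have hg := (summable_geometric_of_lt_one hY0 (by linarith : Y < 1)).mul_left (Y ^ 3)
    calc ∑' i, f (i + 3) ≤ ∑' i, Y ^ 3 * Y ^ i := by
          refine ((summable_nat_add_iff 3).2 hs).tsum_le_tsum (fun i => ?_) hg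
          rw [← pow_add, add_comm 3]; exact hfY _
      _ = Y ^ 3 * (1 - Y)⁻¹ := by rw [tsum_mul_left, tsum_geometric_of_lt_one hY0 (by linarith)]
      _ ≤ Y ^ 3 * 2 := by
          gcongr
          rw [inv_le_comm₀ (by linarith) (by norm_num)]; linarith
      _ = _ := by ring
  have h0 : f 0 = 1 := by simp [hf, Hc_zero_right]
  have h1 : f 1 = τ * l * ((a - l) ^ 2 / l) := by
    rw [hfd, Hc_one, pow_one, pow_one, Nat.factorial_one, Nat.cast_one]; ring
  have h2 : f 2 ≤ (τ * l) ^ 2 * (1 / 2 + (a - l) / l +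
      ((a - l) ^ 2 / l) ^ 2 + 2 * ((a - l) ^ 2 / l)) := by
    rw [hfd, Hc_two]
    gcongr
    set v : ℝ := a - l with hv
    have ha : (a : ℝ) = v + l := by rw [hv]; ring
    have e1 : (Nat.factorial 2 : ℝ) / l ^ 2 * ((v ^ 2 - a) / 2) ^ 2 =
        1 / 2 * (v ^ 2 / l - v / l - 1) ^ 2 := by
      rw [ha]; simp only [Nat.factorial]; push_cast; field_simp; ring
    have e2 : (v / l) ^ 2 ≤ 2 * (v ^ 2 / l) := by
        rw [div_pow, div_le_iff₀ (by positivity)]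
        have : 2 * (v ^ 2 / l) * l ^ 2 = v ^ 2 * (2 * l) := by field_simp
        rw [this]
        exact le_mul_of_one_le_right (sq_nonneg _) (by linarith)
    have e3 : 0 ≤ v ^ 2 / l := by positivity
    rw [e1]
    nlinarith [sq_nonneg (v ^ 2 / l + v / l)]
  rw [Finset.sum_range_succ, Finset.sum_range_succ, Finset.sum_range_one]
  linarith

lemma Gbin_nonneg {l τ : ℝ} (hl : 0 ≤ l) (hτ : 0 ≤ τ) (a : ℕ) : 0 ≤ Gbin τ l a := by
  rw [Gbin_eq hl]
  refine tsum_nonneg fun d => ?_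
  rw [mul_assoc]
  have := mul_self_nonneg (Hc l a d)
  positivity

/-- Product over the bins. The linear terms of `Gbin_le` cancel because the deviations sum to
zero; `S` is `τ l ∑ (a_i - l)² / l`. -/
lemma prod_Gbin_le {n : ℕ} {l τ S : ℝ} (hl : 1 / 2 ≤ l) (hτ : 0 ≤ τ) (a : Fin n → ℕ)
    (hsum : ∑ i, ((a i : ℝ) - l) = 0)
    (hS : τ * l * ∑ i, ((a i : ℝ) - l) ^ 2 / l = S)
    (hsmall : 24 * (τ * l + S) ≤ 1 / 2) :
    ∏ i, Gbin τ l (a i) ≤ Real.exp (S + n * (τ * l) ^ 2 / 2 + S ^ 2 + 2 * (τ * l) * S +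
      8 * 24 ^ 3 * (n * (τ * l) ^ 3 + S ^ 3)) := by
  have hl0 : 0 < l := by linarith
  set ρ := τ * l with hρ
  have hρ0 : 0 ≤ ρ := by positivity
  set X : Fin n → ℝ := fun i => ((a i : ℝ) - l) ^ 2 / l with hXd
  have hX0 : ∀ i, 0 ≤ X i := fun i => by positivity
  have hS' : ∑ i, ρ * X i = S := by rw [← Finset.mul_sum]; exact hS
  have hXS : ∀ i, ρ * X i ≤ S := fun i => by
    rw [← hS']
    exact Finset.single_le_sum (f := fun i => ρ * X i)
      (fun j _ => mul_nonneg hρ0 (hX0 j)) (Finset.mem_univ i)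
  have hS0 : 0 ≤ S := by rw [← hS']; exact Finset.sum_nonneg fun j _ => mul_nonneg hρ0 (hX0 j)
  have hG : ∀ i, Gbin τ l (a i) - 1 ≤ ρ * X i + ρ ^ 2 / 2 + ρ ^ 2 / l * ((a i : ℝ) - l) +
      S * (ρ * X i) + 2 * ρ * (ρ * X i) + 8 * 24 ^ 3 * (ρ ^ 3 + S ^ 2 * (ρ * X i)) := by
    intro i
    have h1 : 24 * ρ * (1 + X i) ≤ 1 / 2 := by
      have := hXS i
      nlinarith
    have h2 := Gbin_le hl hτ (a i) h1
    have h3 : (24 * (τ * l) * (1 + ((a i : ℝ) - l) ^ 2 / l)) ^ 3 ≤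
        4 * 24 ^ 3 * (ρ ^ 3 + S ^ 2 * (ρ * X i)) := by
      have e1 : (24 * (τ * l) * (1 + ((a i : ℝ) - l) ^ 2 / l)) ^ 3 = 24 ^ 3 * (ρ + ρ * X i) ^ 3 := by
        rw [← hρ]; ring
      have hw0 : 0 ≤ ρ * X i := mul_nonneg hρ0 (hX0 i)
      have hwS := hXS i
      set w := ρ * X i
      have e2 : (ρ + w) ^ 3 ≤ 4 * (ρ ^ 3 + w ^ 3) := by
        nlinarith [mul_nonneg (add_nonneg hρ0 hw0) (sq_nonneg (ρ - w))]
      have e3 : w ^ 3 ≤ S ^ 2 * w := by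
        rw [pow_succ]; gcongr
      rw [e1]; nlinarith
    have h4 : ρ ^ 2 * (((a i : ℝ) - l) ^ 2 / l) ^ 2 ≤ S * (ρ * X i) := by
      have := mul_le_mul_of_nonneg_right (hXS i) (mul_nonneg hρ0 (hX0 i))
      calc _ = ρ * X i * (ρ * X i) := by rw [hXd]; ring
        _ ≤ _ := this
    have e5 : ρ ^ 2 / l * ((a i : ℝ) - l) = ρ ^ 2 * (((a i : ℝ) - l) / l) := by ring
    rw [e5]
    have e6 : ρ * X i = ρ * (((a i : ℝ) - l) ^ 2 / l) := rfl
    nlinarith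
  calc ∏ i, Gbin τ l (a i) ≤ ∏ i, Real.exp (Gbin τ l (a i) - 1) := by
        refine Finset.prod_le_prod (fun i _ => Gbin_nonneg hl0.le hτ _) fun i _ => ?_
        have := Real.add_one_le_exp (Gbin τ l (a i) - 1); linarith
    _ = Real.exp (∑ i, (Gbin τ l (a i) - 1)) := (Real.exp_sum _ _).symm
    _ ≤ _ := by
      refine Real.exp_le_exp.2 ((Finset.sum_le_sum fun i _ => hG i).trans (le_of_eq ?_))
      simp only [Finset.sum_add_distrib, ← Finset.mul_sum, hsum]
      simp only [Finset.mul_sum, hS']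
      simp only [Finset.sum_const, Finset.card_univ, Fintype.card_fin,
        nsmul_eq_mul]
      ring

/-! ### Asymptotics in the Flat regime -/

lemma sum_dev_sq {n : ℕ} (hn : 0 < n) (a : Fin n → ℕ) {k : ℕ} (hk : ∑ i, a i = k) :
    ∑ i, ((a i : ℝ) - (k : ℝ) / n) ^ 2 = n * plantV n a := by
  have hn0 : (n : ℝ) ≠ 0 := by positivity
  have hk' : ∑ i, (a i : ℝ) = k := by exact_mod_cast hk
  unfold plantV
  rw [hk']
  have : ∀ i, ((a i : ℝ) - (k : ℝ) / n) ^ 2 =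
      (a i : ℝ) ^ 2 - 2 * (k / n) * a i + (k / n) ^ 2 := fun i => by ring
  simp only [this, Finset.sum_add_distrib, Finset.sum_sub_distrib, ← Finset.mul_sum, hk']
  simp
  field_simp
  ring

lemma sum_dev {n : ℕ} (hn : 0 < n) (a : Fin n → ℕ) {k : ℕ} (hk : ∑ i, a i = k) :
    ∑ i, ((a i : ℝ) - (k : ℝ) / n) = 0 := by
  have hn0 : (n : ℝ) ≠ 0 := by positivity
  have hk' : ∑ i, (a i : ℝ) = k := by exact_mod_cast hk
  rw [Finset.sum_sub_distrib, hk']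
  simp
  field_simp
  ring

lemma plantV_nonneg {n : ℕ} (hn : 0 < n) (a : Fin n → ℕ) : 0 ≤ plantV n a := by
  have h := sum_dev_sq hn a rfl
  have h2 : 0 ≤ ∑ i, ((a i : ℝ) - ((∑ i, a i : ℕ) : ℝ) / n) ^ 2 :=
    Finset.sum_nonneg fun i _ => sq_nonneg _
  rw [h] at h2
  exact nonneg_of_mul_nonneg_right h2 (by positivity)

/-- Integrality of the planting: `a_i² ≥ a_i` forces `V ≥ λ - λ²` with `λ = k / n`. -/
lemma plantV_ge {n : ℕ} (a : Fin n → ℕ) {k : ℕ} (hk : ∑ i, a i = k) :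
    (k : ℝ) / n - (k / n) ^ 2 ≤ plantV n a := by
  have hk' : ∑ i, (a i : ℝ) = k := by exact_mod_cast hk
  unfold plantV
  rw [hk']
  have : (k : ℝ) ≤ ∑ i, (a i : ℝ) ^ 2 := by
    rw [← hk']
    refine Finset.sum_le_sum fun i _ => ?_
    exact_mod_cast Nat.le_self_pow (by norm_num) (a i)
  gcongr

/-- Elementary consequences of the Flat regime. The bound `k / n ≥ 1/2` comes from `plantV_ge`: a
sparse planting has `V` of order `k / n`, which is too large since `n^{3/2} V / k → 0`. -/
lemma flat_facts (A : (n : ℕ) → Fin n → ℕ) (m k : ℕ → ℕ)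
    (hka : ∀ n, ∑ i, A n i = k n)
    (hk : Tendsto (fun n : ℕ => (k n : ℝ) / Real.sqrt n) atTop atTop)
    (c : ℝ) (hc : 0 < c) (hreg : FlatRegime A m k c) :
    (∀ᶠ n in atTop, 0 < n ∧ (1 : ℝ) / 2 ≤ k n / n ∧ 2 * k n ≤ m n ∧ 2 * n ≤ m n) ∧
    Tendsto (fun n : ℕ => (k n : ℝ) * Real.sqrt n / m n) atTop (𝓝 (1 / c)) ∧
    Tendsto (fun n : ℕ => (k n : ℝ) / m n) atTop (𝓝 0) ∧
    Tendsto (fun n : ℕ => (n : ℝ) ^ 2 * plantV n (A n) / m n) atTop (𝓝 0) ∧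
    Tendsto (fun n : ℕ => (n : ℝ) * Real.sqrt n * plantV n (A n) / m n) atTop (𝓝 0) := by
  obtain ⟨h1, h2⟩ := hreg
  have hn0 : ∀ᶠ n : ℕ in atTop, 0 < n := eventually_gt_atTop 0
  have hk0 : ∀ᶠ n : ℕ in atTop, (0 : ℝ) < k n := by
    filter_upwards [hk.eventually_gt_atTop 0, hn0] with n hn hn'
    have : 0 < Real.sqrt n := by positivity
    exact (div_pos_iff_of_pos_right this).1 hn
  have hV : Tendsto (fun n : ℕ => (n : ℝ) * Real.sqrt n * plantV n (A n) / k n) atTop (𝓝 0) := by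
    refine h1.congr fun n => ?_
    congr 2
    rw [show (3 : ℝ) / 2 = 1 + 1 / 2 by norm_num, Real.rpow_add' (by positivity) (by norm_num),
      Real.rpow_one, ← Real.sqrt_eq_rpow]
  have hq : Tendsto (fun n : ℕ => (k n : ℝ) * Real.sqrt n / m n) atTop (𝓝 (1 / c)) := by
    rw [one_div]
    exact (h2.inv₀ hc.ne').congr fun n => by rw [inv_div]
  have hsq : Tendsto (fun n : ℕ => Real.sqrt n) atTop atTop :=
    Real.tendsto_sqrt_atTop.comp tendsto_natCast_atTop_atTop
  have hρ : Tendsto (fun n : ℕ => (k n : ℝ) / m n) atTop (𝓝 0) := by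
    refine (hq.div_atTop hsq).congr' ?_
    filter_upwards [hn0] with n hn
    have : 0 < Real.sqrt n := by positivity
    field_simp
  have hl : ∀ᶠ n : ℕ in atTop, (1 : ℝ) / 2 ≤ k n / n := by
    filter_upwards [hn0, hk0, hV.eventually_lt_const (show (0 : ℝ) < 1 / 2 by norm_num)]
      with n hn hkn hlt
    by_contra hcon
    push Not at hcon
    have hn' : (0 : ℝ) < n := by exact_mod_cast hn
    have hs1 : 1 ≤ Real.sqrt n := by rw [Real.one_le_sqrt]; exact_mod_cast hn
    have h3 := plantV_ge (A n) (hka n)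
    have hl0 : 0 < (k n : ℝ) / n := by positivity
    have h4 : (k n : ℝ) / n / 2 ≤ plantV n (A n) := by nlinarith
    have : (1 : ℝ) / 2 ≤ (n : ℝ) * Real.sqrt n * plantV n (A n) / k n := by
      calc (1 : ℝ) / 2 ≤ Real.sqrt n / 2 := by linarith
        _ = (n : ℝ) * Real.sqrt n * (k n / n / 2) / k n := by field_simp
        _ ≤ _ := by gcongr
    linarith
  have hmpos : ∀ᶠ n : ℕ in atTop, (0 : ℝ) < m n := by
    filter_upwards [hq.eventually_const_lt (show (0 : ℝ) < 1 / c by positivity)] with n hn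
    rcases Nat.eq_zero_or_pos (m n) with h | h
    · simp [h] at hn
    · exact_mod_cast h
  refine ⟨?_, hq, hρ, ?_, ?_⟩
  · filter_upwards [hn0, hl, hmpos, hρ.eventually_lt_const (show (0 : ℝ) < 1 / 4 by norm_num)]
      with n hn hln hm hr
    have hn' : (0 : ℝ) < n := by exact_mod_cast hn
    rw [div_lt_iff₀ hm] at hr
    rw [le_div_iff₀ hn'] at hln
    refine ⟨hn, by rw [le_div_iff₀ hn']; exact hln, ?_, ?_⟩
    · have : 2 * (k n : ℝ) ≤ m n := by linarith
      exact_mod_cast this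
    · have : 2 * (n : ℝ) ≤ m n := by linarith
      exact_mod_cast this
  · have := hV.mul hq
    rw [zero_mul] at this
    refine this.congr' ?_
    filter_upwards [hk0] with n hkn
    have hs : Real.sqrt n * Real.sqrt n = n := Real.mul_self_sqrt (by positivity)
    calc (n : ℝ) * Real.sqrt n * plantV n (A n) / k n * (k n * Real.sqrt n / m n)
        = n * (Real.sqrt n * Real.sqrt n) * plantV n (A n) / m n * (k n / k n) := by ring
      _ = _ := by rw [hs, div_self hkn.ne']; ring
  · have := hV.mul hρ
    rw [zero_mul] at this
    refine this.congr' ?_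
    filter_upwards [hk0] with n hkn
    calc (n : ℝ) * Real.sqrt n * plantV n (A n) / k n * (k n / m n)
        = (n : ℝ) * Real.sqrt n * plantV n (A n) / m n * (k n / k n) := by ring
      _ = _ := by rw [div_self hkn.ne']; ring

lemma tendsto_Rfac (m k : ℕ → ℕ)
    (h : ∀ᶠ n in atTop, 2 * k n ≤ m n ∧ 2 * n ≤ m n) :
    Tendsto (fun n => Rfac (m n) (k n)) atTop (𝓝 1) := by
  have h1 : Tendsto (fun n => m n - k n) atTop atTop :=
    tendsto_atTop_mono' atTop (h.mono fun n hn => by simp only [id]; omega) tendsto_id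
  have h2 := Stirling.tendsto_stirlingSeq_sqrt_pi.comp h1
  have h3 : Tendsto (fun n => ((m n - k n : ℕ) : ℝ) ^ 2 / m n) atTop atTop := by
    refine tendsto_atTop_mono' atTop ?_
      (tendsto_natCast_atTop_atTop.atTop_mul_const (show (0 : ℝ) < 1 / 2 by norm_num))
    filter_upwards [h, eventually_gt_atTop 0] with n hn hn0
    have hm0 : (0 : ℝ) < m n := by exact_mod_cast (by omega : 0 < m n)
    rw [le_div_iff₀ hm0]
    have e1 : (m n : ℝ) / 2 ≤ ((m n - k n : ℕ) : ℝ) := by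
      rw [Nat.cast_sub (by omega)]
      have : 2 * (k n : ℝ) ≤ m n := by exact_mod_cast hn.1
      linarith
    have e2 : 2 * (n : ℝ) ≤ m n := by exact_mod_cast hn.2
    nlinarith
  have h4 := (tendsto_nat_floor_div_atTop (R := ℝ)).comp h3
  have h5 := (h4.inv₀ one_ne_zero).sqrt
  have h6 := ((h2.pow 2).div_const Real.pi).mul h5
  rw [Real.sq_sqrt Real.pi_pos.le, div_self Real.pi_pos.ne', inv_one, Real.sqrt_one, mul_one] at h6
  refine h6.congr fun n => ?_
  simp only [Function.comp, Rfac, inv_div]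

/-- Asymptotic upper bound for the second moment of the likelihood ratio; the limit is the second
moment of the Gaussian likelihood ratio `dN(-σ,1)/dN(0,1)` with `σ² = 1/(2c²)`. -/
lemma second_moment (A : (n : ℕ) → Fin n → ℕ) (m k : ℕ → ℕ)
    (hka : ∀ n, ∑ i, A n i = k n)
    (hk : Tendsto (fun n : ℕ => (k n : ℝ) / Real.sqrt n) atTop atTop)
    (c : ℝ) (hc : 0 < c) (hreg : FlatRegime A m k c) :
    ∃ B : ℕ → ℝ, Tendsto B atTop (𝓝 (Real.exp (1 / (2 * c ^ 2)))) ∧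
      ∀ᶠ n in atTop, EE n (m n) (fun z => LR n (m n) (A n) z ^ 2) ≤ B n := by
  obtain ⟨hev, hq, hρ, hS, -⟩ := flat_facts A m k hka hk c hc hreg
  set ρ : ℕ → ℝ := fun n => (k n : ℝ) / m n with hρd
  set S : ℕ → ℝ := fun n => (n : ℝ) ^ 2 * plantV n (A n) / m n with hSd
  have hnρ : Tendsto (fun n : ℕ => (n : ℝ) * ρ n ^ 2) atTop (𝓝 ((1 / c) ^ 2)) := by
    refine (hq.pow 2).congr fun n => ?_
    rw [hρd, div_pow, mul_pow, Real.sq_sqrt (by positivity)]; ring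
  refine ⟨fun n => Rfac (m n) (k n) * Real.exp (S n + n * ρ n ^ 2 / 2 + S n ^ 2 + 2 * ρ n * S n +
      8 * 24 ^ 3 * (n * ρ n ^ 3 + S n ^ 3)), ?_, ?_⟩
  · have hR := tendsto_Rfac m k (hev.mono fun n hn => ⟨hn.2.2.1, hn.2.2.2⟩)
    have hn3 : Tendsto (fun n : ℕ => (n : ℝ) * ρ n ^ 3) atTop (𝓝 0) := by
      have := hnρ.mul hρ
      rw [mul_zero] at this
      exact this.congr fun n => by ring
    have hE : Tendsto (fun n : ℕ => S n + n * ρ n ^ 2 / 2 + S n ^ 2 + 2 * ρ n * S n +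
      8 * 24 ^ 3 * (n * ρ n ^ 3 + S n ^ 3)) atTop (𝓝 (0 + (1 / c) ^ 2 / 2 + 0 ^ 2 + 2 * 0 * 0 +
        8 * 24 ^ 3 * (0 + 0 ^ 3))) :=
      ((((hS.add (hnρ.div_const 2)).add (hS.pow 2)).add ((hρ.const_mul 2).mul hS)).add
        ((hn3.add (hS.pow 3)).const_mul _))
    have := hR.mul ((Real.continuous_exp.tendsto _).comp hE)
    rw [show (1 : ℝ) * Real.exp (0 + (1 / c) ^ 2 / 2 + 0 ^ 2 + 2 * 0 * 0 +
      8 * 24 ^ 3 * (0 + 0 ^ 3)) = Real.exp (1 / (2 * c ^ 2)) by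
        rw [one_mul]; congr 1; field_simp; ring] at this
    exact this
  · have hsm : Tendsto (fun n => 24 * (ρ n + S n)) atTop (𝓝 (24 * (0 + 0))) :=
      (hρ.add hS).const_mul _
    filter_upwards [hev, hsm.eventually_lt_const (show 24 * ((0 : ℝ) + 0) < 1 / 2 by norm_num),
      eventually_ge_atTop 2] with n hn hlt hn2
    obtain ⟨hn0, hl, h2k, h2n⟩ := hn
    have hn' : (0 : ℝ) < n := by exact_mod_cast hn0
    have hm0 : (0 : ℝ) < m n := by exact_mod_cast (by omega : 0 < m n)
    have hk0 : (0 : ℝ) < k n := by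
      have := (le_div_iff₀ hn').1 hl
      linarith
    have hM : 1 ≤ ((m n - k n : ℕ) : ℝ) ^ 2 / m n := by
      rw [le_div_iff₀ hm0]
      have e1 : (m n : ℝ) / 2 ≤ ((m n - k n : ℕ) : ℝ) := by
        rw [Nat.cast_sub (by omega)]
        have : 2 * (k n : ℝ) ≤ m n := by exact_mod_cast h2k
        linarith
      have e2 : 2 * (n : ℝ) ≤ m n := by exact_mod_cast h2n
      have e3 : (2 : ℝ) ≤ n := by exact_mod_cast hn2
      nlinarith
    refine (EE_LR_sq_le hn0 (A n) (hka n) h2k hM).trans ?_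
    have hτl : (n : ℝ) / m n * (k n / n) = ρ n := by rw [hρd]; field_simp
    have hSn : (n : ℝ) / m n * (k n / n) * ∑ i, ((A n i : ℝ) - k n / n) ^ 2 / (k n / n) = S n := by
      rw [← Finset.sum_div, sum_dev_sq hn0 (A n) (hka n), hSd]; field_simp
    have hR0 : 0 ≤ Rfac (m n) (k n) := by
      unfold Rfac
      have := Real.pi_pos
      positivity
    have := prod_Gbin_le (n := n) hl (show (0 : ℝ) ≤ n / m n by positivity) (A n)
      (sum_dev hn0 (A n) (hka n)) hSn (by rw [hτl]; exact hlt.le)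
    rw [hτl] at this
    exact mul_le_mul_of_nonneg_left this hR0

/-! ### Central limit theorems -/

/-- The law of a statistic `W` under the standard distribution. -/
noncomputable def lawST (n m : ℕ) (W : (Fin n → ℕ) → ℝ) : MeasureTheory.Measure ℝ :=
  ∑ z ∈ Finset.piAntidiag univ m,
    ENNReal.ofReal (stProb n m z) • MeasureTheory.Measure.dirac (W z)

lemma integral_lawST {E : Type*} [NormedAddCommGroup E] [NormedSpace ℝ E] [CompleteSpace E]
    (n m : ℕ) (W : (Fin n → ℕ) → ℝ) (f : ℝ → E) :
    ∫ x, f x ∂(lawST n m W) = EE n m (fun z => f (W z)) := by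
  unfold lawST EE
  rw [MeasureTheory.integral_finsetSum_measure]
  · refine Finset.sum_congr rfl fun z _ => ?_
    rw [MeasureTheory.integral_smul_measure, MeasureTheory.integral_dirac,
      ENNReal.toReal_ofReal (stProb_nonneg _ _ _)]
  · intro z _
    exact (MeasureTheory.integrable_dirac (by simp)).smul_measure ENNReal.ofReal_ne_top

lemma isProb_lawST {n : ℕ} (hn : 0 < n) (m : ℕ) (W : (Fin n → ℕ) → ℝ) :
    MeasureTheory.IsProbabilityMeasure (lawST n m W) := by
  constructor
  have h := EE_const hn m (1 : ℝ)
  unfold EE at h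
  unfold lawST
  simp only [MeasureTheory.Measure.finsetSum_apply, MeasureTheory.Measure.smul_apply,
    MeasureTheory.measure_univ, smul_eq_mul, mul_one]
  rw [← ENNReal.ofReal_sum_of_nonneg fun z _ => stProb_nonneg _ _ _]
  simp only [smul_eq_mul, mul_one] at h
  rw [h, ENNReal.ofReal_one]

/-- Lévy continuity theorem for statistics of configurations. -/
lemma tendsto_EE_of_chr {μ₀ : ℝ} (M : ℕ → ℕ) (W : (n : ℕ) → (Fin n → ℕ) → ℝ)
    (h : ∀ t : ℝ, Tendsto (fun n => EE n (M n) (fun z => chr (t * W n z))) atTop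
      (𝓝 (Complex.exp (t * μ₀ * Complex.I - (t : ℂ) ^ 2 / 2))))
    (φ : BoundedContinuousFunction ℝ ℝ) :
    Tendsto (fun n => EE n (M n) (fun z => φ (W n z))) atTop
      (𝓝 (∫ x, φ x ∂(ProbabilityTheory.gaussianReal μ₀ 1))) := by
  rw [← tendsto_add_atTop_iff_nat 1]
  let ν : ℕ → MeasureTheory.ProbabilityMeasure ℝ := fun n =>
    ⟨lawST (n + 1) (M (n + 1)) (W (n + 1)), isProb_lawST (Nat.succ_pos n) _ _⟩
  let ν₀ : MeasureTheory.ProbabilityMeasure ℝ := ⟨ProbabilityTheory.gaussianReal μ₀ 1, inferInstance⟩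
  have hν : Tendsto ν atTop (𝓝 ν₀) := by
    rw [MeasureTheory.ProbabilityMeasure.tendsto_iff_tendsto_charFun]
    intro t
    have h1 := (tendsto_add_atTop_iff_nat 1).2 (h t)
    have e0 : MeasureTheory.charFun (ν₀ : MeasureTheory.Measure ℝ) t =
        Complex.exp (t * μ₀ * Complex.I - (t : ℂ) ^ 2 / 2) := by
      change MeasureTheory.charFun (ProbabilityTheory.gaussianReal μ₀ 1) t = _
      rw [ProbabilityTheory.charFun_gaussianReal]; simp
    rw [e0]
    refine h1.congr fun n => ?_
    change _ = MeasureTheory.charFun (lawST (n + 1) (M (n + 1)) (W (n + 1))) t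
    rw [MeasureTheory.charFun_apply_real, integral_lawST]
    congr 1; ext z; unfold chr; congr 1; push_cast; ring
  have h2 := MeasureTheory.ProbabilityMeasure.tendsto_iff_forall_integral_tendsto.1 hν φ
  refine h2.congr fun n => ?_
  exact integral_lawST _ _ _ _

/-- The normalised quadratic statistic: `∑ z_i²` minus its mean under ST(m,n), divided by `sdS`. -/
noncomputable def Wst (n m : ℕ) (z : Fin n → ℕ) : ℝ := (SS z - meanS n m) / sdS n m

/-- The error bound of `phiS_clt` vanishes. -/
lemma tendsto_clt_err (t : ℝ) : Tendsto (fun n : ℕ =>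
    12 / Real.sqrt n * (|t| + |t| ^ 2 + |t| ^ 3) * |t|) atTop (𝓝 0) := by
  have hsq : Tendsto (fun n : ℕ => Real.sqrt n) atTop atTop :=
    Real.tendsto_sqrt_atTop.comp tendsto_natCast_atTop_atTop
  have := (((tendsto_const_nhds (x := (12 : ℝ))).div_atTop hsq).mul_const
    (|t| + |t| ^ 2 + |t| ^ 3)).mul_const |t|
  simpa using this

/-- Under the standard distribution, `Wst` converges in law to `N(0,1)`. -/
lemma clt_standard (m : ℕ → ℕ) (hm : ∀ᶠ n in atTop, 2 * n ≤ m n)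
    (φ : BoundedContinuousFunction ℝ ℝ) :
    Tendsto (fun n => EE n (m n) (fun z => φ (Wst n (m n) z))) atTop
      (𝓝 (∫ x, φ x ∂(ProbabilityTheory.gaussianReal 0 1))) := by
  refine tendsto_EE_of_chr m (fun n => Wst n (m n)) (fun t => ?_) φ
  rw [tendsto_iff_norm_sub_tendsto_zero]
  refine squeeze_zero' (Eventually.of_forall fun n => norm_nonneg _) ?_ (tendsto_clt_err t)
  filter_upwards [hm, eventually_gt_atTop 0] with n hn hn0
  have := phiS_clt hn0 (show n ≤ m n by omega) t
  have e : Complex.exp (t * (0 : ℝ) * Complex.I - (t : ℂ) ^ 2 / 2) =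
      Complex.exp (-(t : ℂ) ^ 2 / 2) := by
    congr 1; push_cast; ring
  rw [e]
  exact this

/-- The quadratic statistic of a planted configuration, in terms of the unplanted balls `y`. -/
lemma Wst_add {n m k : ℕ} (hn : 0 < n) (a y : Fin n → ℕ) (hka : ∑ i, a i = k) (hkm : k < m)
    (hy : ∑ i, y i = m - k) :
    Wst n m (y + a) = ((m - k : ℕ) : ℝ) / m * Wst n (m - k) y +
      (2 / sdS n m * ell (fun i => (a i : ℝ) - (k : ℝ) / n) y +
        (-(k : ℝ) * (1 - 1 / n) + n * plantV n a) / sdS n m) := by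
  have hn0 : (n : ℝ) ≠ 0 := by positivity
  have hp0 : (0 : ℝ) < ((m - k : ℕ) : ℝ) := by exact_mod_cast Nat.sub_pos_of_lt hkm
  have hm0 : (0 : ℝ) < m := by exact_mod_cast (by omega : 0 < m)
  have hs := sdS_pos hn (show 0 < m by omega)
  have hsp := sdS_pos hn (Nat.sub_pos_of_lt hkm)
  have hss : sdS n (m - k) = ((m - k : ℕ) : ℝ) / m * sdS n m := by
    unfold sdS; field_simp
  have e1 : SS (y + a) = SS y + 2 * ∑ i, (a i : ℝ) * y i + ∑ i, (a i : ℝ) ^ 2 := by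
    unfold SS
    rw [Finset.mul_sum, ← Finset.sum_add_distrib, ← Finset.sum_add_distrib]
    refine Finset.sum_congr rfl fun i _ => ?_
    simp only [Pi.add_apply]; push_cast; ring
  have hy' : ∑ i, (y i : ℝ) = ((m - k : ℕ) : ℝ) := by exact_mod_cast hy
  have e2 : ell (fun i => (a i : ℝ) - (k : ℝ) / n) y = ∑ i, (a i : ℝ) * y i -
      k / n * ((m - k : ℕ) : ℝ) := by
    unfold ell
    simp only [sub_mul, Finset.sum_sub_distrib, ← Finset.mul_sum, hy']
  have hk' : ∑ i, (a i : ℝ) = k := by exact_mod_cast hka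
  have e3 : ∑ i, (a i : ℝ) ^ 2 = n * plantV n a + k ^ 2 / n := by
    unfold plantV; rw [hk']; field_simp; ring
  have hpr : ((m - k : ℕ) : ℝ) = m - k := Nat.cast_sub hkm.le
  unfold Wst
  have e4 : ((m - k : ℕ) : ℝ) / m * ((SS y - meanS n (m - k)) / sdS n (m - k)) =
      (SS y - meanS n (m - k)) / sdS n m := by
    rw [hss]; field_simp
  rw [e4, e1, e2, e3]
  unfold meanS
  rw [hpr]
  field_simp
  ring

/-- Under the planted distribution, `Wst` converges in law to `N(-σ,1)`, `σ = 1/(√2 c)`. -/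
lemma clt_planted (A : (n : ℕ) → Fin n → ℕ) (m k : ℕ → ℕ)
    (hka : ∀ n, ∑ i, A n i = k n)
    (hk : Tendsto (fun n : ℕ => (k n : ℝ) / Real.sqrt n) atTop atTop)
    (c : ℝ) (hc : 0 < c) (hreg : FlatRegime A m k c) (φ : BoundedContinuousFunction ℝ ℝ) :
    Tendsto (fun n => EE n (m n - k n) (fun y => φ (Wst n (m n) (y + A n)))) atTop
      (𝓝 (∫ x, φ x ∂(ProbabilityTheory.gaussianReal (-(1 / (Real.sqrt 2 * c))) 1))) := by
  obtain ⟨hev, hq, hρ, hS, hV⟩ := flat_facts A m k hka hk c hc hreg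
  refine tendsto_EE_of_chr (fun n => m n - k n) (fun n y => Wst n (m n) (y + A n)) (fun t => ?_) φ
  -- the three pieces of the decomposition `Wst_add`: shift, scale and linear term
  set b : ℕ → ℝ := fun n => (-(k n : ℝ) * (1 - 1 / n) + n * plantV n (A n)) / sdS n (m n) with hb
  set r : ℕ → ℝ := fun n => ((m n - k n : ℕ) : ℝ) / m n with hr
  have hbl : Tendsto b atTop (𝓝 (-(1 / (Real.sqrt 2 * c)))) := by
    have h1 : Tendsto (fun n : ℕ => (-((k n : ℝ) * Real.sqrt n / m n) * (1 - 1 / n) +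
        n * Real.sqrt n * plantV n (A n) / m n) / Real.sqrt 2) atTop
        (𝓝 ((-(1 / c) * (1 - 0) + 0) / Real.sqrt 2)) :=
      ((hq.neg.mul (tendsto_const_nhds.sub tendsto_one_div_atTop_nhds_zero_nat)).add hV).div_const _
    have e : (-(1 / c) * (1 - 0) + 0) / Real.sqrt 2 = -(1 / (Real.sqrt 2 * c)) := by
      field_simp; ring
    rw [e] at h1
    refine h1.congr' ?_
    filter_upwards [hev] with n hn
    have hn0 : (0 : ℝ) < n := by exact_mod_cast hn.1
    have hm0 : (0 : ℝ) < m n := by exact_mod_cast (by omega : 0 < m n)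
    have : 0 < Real.sqrt n := by positivity
    rw [hb]; unfold sdS
    field_simp
  have hrl : Tendsto r atTop (𝓝 1) := by
    have h1 := (tendsto_const_nhds (x := (1 : ℝ))).sub hρ
    rw [sub_zero] at h1
    refine h1.congr' ?_
    filter_upwards [hev] with n hn
    have hm0 : (0 : ℝ) < m n := by exact_mod_cast (by omega : 0 < m n)
    rw [hr]
    simp only []
    rw [Nat.cast_sub (by omega)]
    field_simp
  -- main term
  have hmain : Tendsto (fun n => chr (t * b n) * phiS n (m n - k n) (t * r n)) atTop
      (𝓝 (chr (t * -(1 / (Real.sqrt 2 * c))) * Complex.exp (-(t : ℂ) ^ 2 / 2))) := by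
    have hcont : Continuous chr := by unfold chr; fun_prop
    refine Tendsto.mul ((hcont.tendsto _).comp (hbl.const_mul t)) ?_
    have h1 : Tendsto (fun n => Complex.exp (-((t * r n : ℝ) : ℂ) ^ 2 / 2)) atTop
        (𝓝 (Complex.exp (-((t * 1 : ℝ) : ℂ) ^ 2 / 2))) := by
      have hc2 : Continuous (fun x : ℝ => Complex.exp (-(x : ℂ) ^ 2 / 2)) := by fun_prop
      exact (hc2.tendsto _).comp (hrl.const_mul t)
    rw [mul_one] at h1
    have h2 : Tendsto (fun n => phiS n (m n - k n) (t * r n) -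
        Complex.exp (-((t * r n : ℝ) : ℂ) ^ 2 / 2)) atTop (𝓝 0) := by
      rw [tendsto_zero_iff_norm_tendsto_zero]
      refine squeeze_zero' (Eventually.of_forall fun n => norm_nonneg _) ?_ (tendsto_clt_err t)
      filter_upwards [hev] with n hn
      have hm0 : (0 : ℝ) < m n := by exact_mod_cast (by omega : 0 < m n)
      refine (phiS_clt hn.1 (show n ≤ m n - k n by omega) (t * r n)).trans ?_
      have hr1 : |t * r n| ≤ |t| := by
        rw [abs_mul]
        refine mul_le_of_le_one_right (abs_nonneg _) ?_
        rw [hr, abs_of_nonneg (by positivity), div_le_one hm0]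
        exact_mod_cast Nat.sub_le _ _
      gcongr
    have := h2.add h1
    rw [zero_add] at this
    exact this.congr fun n => by ring
  -- error from the linear term
  have herr : Tendsto (fun n : ℕ => |t| * Real.sqrt (2 * ((n : ℝ) ^ 2 * plantV n (A n) / m n))) atTop
      (𝓝 0) := by
    have := ((hS.const_mul 2).sqrt).const_mul |t|
    simpa using this
  have hdiff : Tendsto (fun n => EE n (m n - k n) (fun y => chr (t * Wst n (m n) (y + A n))) -
      chr (t * b n) * phiS n (m n - k n) (t * r n)) atTop (𝓝 0) := by
    rw [tendsto_zero_iff_norm_tendsto_zero]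
    refine squeeze_zero' (Eventually.of_forall fun n => norm_nonneg _) ?_ herr
    filter_upwards [hev] with n hn
    obtain ⟨hn0, hl, h2k, h2n⟩ := hn
    have hn' : (0 : ℝ) < n := by exact_mod_cast hn0
    have hn1 : (1 : ℝ) ≤ n := by exact_mod_cast hn0
    have hm0 : (0 : ℝ) < m n := by exact_mod_cast (by omega : 0 < m n)
    have hs := sdS_pos hn0 (show 0 < m n by omega)
    set L : (Fin n → ℕ) → ℝ := ell (fun i => (A n i : ℝ) - (k n : ℝ) / n)
    have e1 : EE n (m n - k n) (fun y => chr (t * Wst n (m n) (y + A n))) =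
        EE n (m n - k n) (fun y => chr (t * b n) * (chr (t * r n * Wst n (m n - k n) y) *
          chr (t * (2 / sdS n (m n) * L y)))) := by
      refine EE_congr fun y hy => ?_
      rw [Wst_add hn0 (A n) y (hka n) (by omega) hy, ← chr_add, ← chr_add]
      congr 1
      simp only [hb, hr, L]; ring
    have e2 : chr (t * b n) * phiS n (m n - k n) (t * r n) =
        EE n (m n - k n) (fun y => chr (t * b n) * chr (t * r n * Wst n (m n - k n) y)) := by
      unfold phiS EE
      rw [Finset.mul_sum]
      refine Finset.sum_congr rfl fun z _ => ?_
      simp only [Complex.real_smul, Wst]; ring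
    rw [e1, e2, ← EE_sub]
    refine (norm_EE_le _ _ _).trans ?_
    have e3 : EE n (m n - k n) (fun y => ‖chr (t * b n) * (chr (t * r n * Wst n (m n - k n) y) *
          chr (t * (2 / sdS n (m n) * L y))) -
          chr (t * b n) * chr (t * r n * Wst n (m n - k n) y)‖) ≤
        EE n (m n - k n) (fun y => (|t| * (2 / sdS n (m n))) • |L y|) := by
      refine EE_mono fun y _ => ?_
      rw [← mul_sub, ← mul_sub_one, norm_mul, norm_mul, chr_norm, chr_norm, one_mul, one_mul]
      refine (chr_sub_one _).trans (le_of_eq ?_)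
      rw [abs_mul, abs_mul, abs_of_pos (show 0 < 2 / sdS n (m n) by positivity), smul_eq_mul]; ring
    refine e3.trans ?_
    rw [EE_smul, smul_eq_mul, mul_assoc]
    refine mul_le_mul_of_nonneg_left ?_ (abs_nonneg _)
    refine Real.le_sqrt_of_sq_le ?_
    rw [mul_pow]
    have e4 := EE_abs_sq_le hn0 (m n - k n) L
    have e5 : EE n (m n - k n) (fun z => L z ^ 2) = _ :=
      EE_ell_sq hn0 (m n - k n) (sum_dev hn0 (A n) (hka n))
    rw [e5, sum_dev_sq hn0 (A n) (hka n)] at e4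
    have hV0 := plantV_nonneg hn0 (A n)
    have hpm : ((m n - k n : ℕ) : ℝ) ≤ m n := by exact_mod_cast Nat.sub_le _ _
    calc (2 / sdS n (m n)) ^ 2 * EE n (m n - k n) (fun z => |L z|) ^ 2
        ≤ (2 / sdS n (m n)) ^ 2 * (m n * (n * plantV n (A n) / n)) := by
          gcongr
          exact e4.trans (by gcongr)
      _ = 2 * ((n : ℝ) * plantV n (A n) / m n) := by
          rw [div_pow, sdS_sq]; field_simp
      _ ≤ _ := by
          gcongr
          exact le_self_pow₀ hn1 (by norm_num)
  have hfin := hdiff.add hmain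
  rw [zero_add] at hfin
  have e : chr (t * -(1 / (Real.sqrt 2 * c))) * Complex.exp (-(t : ℂ) ^ 2 / 2) =
      Complex.exp (t * (-(1 / (Real.sqrt 2 * c)) : ℝ) * Complex.I - (t : ℂ) ^ 2 / 2) := by
    unfold chr
    rw [← Complex.exp_add]; congr 1; push_cast; ring
  rw [e] at hfin
  exact hfin.congr fun n => by ring

/-! ### Gaussian limits and conclusion -/

open MeasureTheory ProbabilityTheory in
lemma gaussian_cdf (x : ℝ) : stdNormalCDF x = ∫ t in Set.Iic x, gaussianPDFReal 0 1 t := by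
  unfold stdNormalCDF
  refine integral_congr_ae (ae_of_all _ fun t => ?_)
  simp only [gaussianPDFReal, NNReal.coe_one, mul_one, sub_zero]
  ring

open MeasureTheory ProbabilityTheory in
lemma gaussian_cdf_shift (σ a : ℝ) :
    ∫ t in Set.Iic a, gaussianPDFReal (-σ) 1 t = stdNormalCDF (a + σ) := by
  rw [gaussian_cdf, ← integral_indicator measurableSet_Iic, ← integral_indicator measurableSet_Iic,
    ← integral_add_right_eq_self ((Set.Iic (a + σ)).indicator _) σ]
  congr 1; ext x
  simp only [Set.indicator, Set.mem_Iic, add_le_add_iff_right]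
  rw [gaussianPDFReal_add, zero_sub]

open MeasureTheory ProbabilityTheory in
lemma gaussian_Ioi (μ a : ℝ) : ∫ t in Set.Ioi a, gaussianPDFReal μ 1 t =
    1 - ∫ t in Set.Iic a, gaussianPDFReal μ 1 t := by
  have := integral_add_compl (measurableSet_Iic (a := a)) (integrable_gaussianPDFReal μ 1)
  rw [integral_gaussianPDFReal_eq_one μ one_ne_zero, Set.compl_Iic] at this
  linarith

open MeasureTheory ProbabilityTheory in
lemma gaussian_cdf_neg (x : ℝ) : stdNormalCDF (-x) = 1 - stdNormalCDF x := by
  rw [gaussian_cdf x, ← gaussian_Ioi, gaussian_cdf]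
  have := integral_comp_neg_Iic (-x) (gaussianPDFReal 0 1)
  rw [neg_neg] at this
  rw [← this]
  congr 1; ext t
  simp [gaussianPDFReal]

/-- The limiting likelihood ratio, the density of `N(-σ,1)` with respect to `N(0,1)`. -/
noncomputable def glim (σ x : ℝ) : ℝ := Real.exp (-σ * x - σ ^ 2 / 2)

open ProbabilityTheory in
/-- Exponential tilting by `glim` shifts the mean of a Gaussian density by `-σ`. -/
lemma pdf_mul_glim (σ μ x : ℝ) :
    gaussianPDFReal μ 1 x * glim σ x = Real.exp (-σ * μ) * gaussianPDFReal (μ - σ) 1 x := by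
  unfold gaussianPDFReal glim
  rw [mul_assoc, ← Real.exp_add, mul_left_comm, ← Real.exp_add]
  congr 2
  simp only [NNReal.coe_one]
  ring

open MeasureTheory ProbabilityTheory in
/-- The `L¹` distance between `N(0,1)` and `N(-σ,1)`: the densities cross at `-σ/2`. -/
lemma gaussian_tv (σ : ℝ) (hσ : 0 < σ) :
    ∫ x, gaussianPDFReal 0 1 x * |1 - glim σ x| = 2 * (2 * stdNormalCDF (σ / 2) - 1) := by
  have hi0 := integrable_gaussianPDFReal 0 1
  have hi1 := integrable_gaussianPDFReal (-σ) 1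
  have e : ∀ x, gaussianPDFReal 0 1 x * |1 - glim σ x| =
      |gaussianPDFReal 0 1 x - gaussianPDFReal (-σ) 1 x| := fun x => by
    have h := pdf_mul_glim σ 0 x
    rw [mul_zero, Real.exp_zero, one_mul, zero_sub] at h
    rw [← h, ← mul_one_sub, abs_mul, abs_of_nonneg (gaussianPDFReal_nonneg 0 1 x)]
  have hcmp : ∀ x, glim σ x ≤ 1 ↔ -(σ / 2) ≤ x := fun x => by
    unfold glim
    rw [Real.exp_le_one_iff]
    constructor <;> intro h <;> nlinarith
  rw [← integral_add_compl (measurableSet_Iic (a := -(σ / 2)))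
    (by simp_rw [e]; exact (hi0.sub hi1).abs), Set.compl_Iic]
  have e1 : ∫ x in Set.Iic (-(σ / 2)), gaussianPDFReal 0 1 x * |1 - glim σ x| =
      ∫ x in Set.Iic (-(σ / 2)), (gaussianPDFReal (-σ) 1 x - gaussianPDFReal 0 1 x) := by
    refine setIntegral_congr_fun measurableSet_Iic fun x hx => ?_
    have h := pdf_mul_glim σ 0 x
    rw [mul_zero, Real.exp_zero, one_mul, zero_sub] at h
    have h1 : 1 ≤ glim σ x := by
      unfold glim
      rw [Real.one_le_exp_iff]
      have : x ≤ -(σ / 2) := hx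
      nlinarith
    rw [← h, abs_of_nonpos (by linarith)]; ring
  have e2 : ∫ x in Set.Ioi (-(σ / 2)), gaussianPDFReal 0 1 x * |1 - glim σ x| =
      ∫ x in Set.Ioi (-(σ / 2)), (gaussianPDFReal 0 1 x - gaussianPDFReal (-σ) 1 x) := by
    refine setIntegral_congr_fun measurableSet_Ioi fun x hx => ?_
    have h := pdf_mul_glim σ 0 x
    rw [mul_zero, Real.exp_zero, one_mul, zero_sub] at h
    have h1 := (hcmp x).2 (le_of_lt hx)
    rw [← h, abs_of_nonneg (by linarith)]; ring
  rw [e1, e2, integral_sub hi1.integrableOn hi0.integrableOn,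
    integral_sub hi0.integrableOn hi1.integrableOn, gaussian_Ioi, gaussian_Ioi,
    gaussian_cdf_shift, ← gaussian_cdf, gaussian_cdf_neg,
    show -(σ / 2) + σ = σ / 2 by ring]
  ring

/-- The limiting likelihood ratio truncated at height `M`. -/
noncomputable def gtr (σ : ℝ) (M : ℕ) : BoundedContinuousFunction ℝ ℝ :=
  BoundedContinuousFunction.ofNormedAddCommGroup (fun x => min (glim σ x) M)
    (by unfold glim; fun_prop) M (fun x => by
      have : 0 ≤ glim σ x := (Real.exp_pos _).le
      rw [Real.norm_eq_abs, abs_of_nonneg (le_min this (Nat.cast_nonneg _))]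
      exact min_le_right _ _)

lemma gtr_apply (σ : ℝ) (M : ℕ) (x : ℝ) : gtr σ M x = min (glim σ x) M := rfl

lemma gtr_nonneg (σ : ℝ) (M : ℕ) (x : ℝ) : 0 ≤ gtr σ M x :=
  le_min (Real.exp_pos _).le (Nat.cast_nonneg _)

lemma gtr_le (σ : ℝ) (M : ℕ) (x : ℝ) : gtr σ M x ≤ glim σ x := min_le_left _ _

lemma gtr_eventually (σ x : ℝ) : ∀ᶠ M in atTop, gtr σ M x = glim σ x := by
  filter_upwards [tendsto_natCast_atTop_atTop.eventually_ge_atTop (glim σ x)] with M hM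
  rw [gtr_apply, min_eq_left hM]

open MeasureTheory ProbabilityTheory in
lemma tendsto_gtr_planted (σ : ℝ) :
    Tendsto (fun M => ∫ x, gtr σ M x ∂(gaussianReal (-σ) 1)) atTop (𝓝 (Real.exp (σ ^ 2))) := by
  simp_rw [integral_gaussianReal_eq_integral_smul (one_ne_zero), smul_eq_mul]
  have key : ∀ x, gaussianPDFReal (-σ) 1 x * glim σ x =
      Real.exp (σ ^ 2) * gaussianPDFReal (-σ - σ) 1 x := fun x => by
    rw [pdf_mul_glim]; ring_nf
  have hlim : ∫ x, gaussianPDFReal (-σ) 1 x * glim σ x = Real.exp (σ ^ 2) := by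
    simp_rw [key]
    rw [integral_const_mul, integral_gaussianPDFReal_eq_one _ one_ne_zero, mul_one]
  rw [← hlim]
  refine tendsto_integral_of_dominated_convergence
    (fun x => gaussianPDFReal (-σ) 1 x * glim σ x) (fun M => ?_) ?_ (fun M => ae_of_all _ fun x => ?_)
    (ae_of_all _ fun x => ?_)
  · exact ((measurable_gaussianPDFReal _ _).mul (gtr σ M).continuous.measurable).aestronglyMeasurable
  · simp_rw [key]; exact (integrable_gaussianPDFReal _ _).const_mul _
  · rw [Real.norm_eq_abs, abs_of_nonneg (mul_nonneg (gaussianPDFReal_nonneg _ _ _) (gtr_nonneg _ _ _))]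
    exact mul_le_mul_of_nonneg_left (gtr_le _ _ _) (gaussianPDFReal_nonneg _ _ _)
  · refine tendsto_const_nhds.congr' ?_
    filter_upwards [gtr_eventually σ x] with M hM
    rw [hM]

open MeasureTheory ProbabilityTheory in
lemma tendsto_gtr_sq (σ : ℝ) :
    Tendsto (fun M => ∫ x, gtr σ M x ^ 2 ∂(gaussianReal 0 1)) atTop (𝓝 (Real.exp (σ ^ 2))) := by
  simp_rw [integral_gaussianReal_eq_integral_smul (one_ne_zero), smul_eq_mul]
  have key : ∀ x, gaussianPDFReal 0 1 x * glim σ x ^ 2 =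
      Real.exp (σ ^ 2) * gaussianPDFReal (-σ - σ) 1 x := fun x => by
    rw [sq, ← mul_assoc, pdf_mul_glim, mul_assoc, zero_sub, pdf_mul_glim]
    simp [sq]
  have hlim : ∫ x, gaussianPDFReal 0 1 x * glim σ x ^ 2 = Real.exp (σ ^ 2) := by
    simp_rw [key]
    rw [integral_const_mul, integral_gaussianPDFReal_eq_one _ one_ne_zero, mul_one]
  rw [← hlim]
  refine tendsto_integral_of_dominated_convergence
    (fun x => gaussianPDFReal 0 1 x * glim σ x ^ 2) (fun M => ?_) ?_
    (fun M => ae_of_all _ fun x => ?_) (ae_of_all _ fun x => ?_)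
  · exact ((measurable_gaussianPDFReal _ _).mul
      ((gtr σ M).continuous.measurable.pow_const 2)).aestronglyMeasurable
  · simp_rw [key]; exact (integrable_gaussianPDFReal _ _).const_mul _
  · rw [Real.norm_eq_abs, abs_of_nonneg (mul_nonneg (gaussianPDFReal_nonneg _ _ _) (sq_nonneg _))]
    exact mul_le_mul_of_nonneg_left (pow_le_pow_left₀ (gtr_nonneg _ _ _) (gtr_le _ _ _) 2)
      (gaussianPDFReal_nonneg _ _ _)
  · refine tendsto_const_nhds.congr' ?_
    filter_upwards [gtr_eventually σ x] with M hM
    rw [hM]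

open MeasureTheory ProbabilityTheory in
lemma tendsto_gtr_abs (σ : ℝ) (hσ : 0 < σ) :
    Tendsto (fun M => ∫ x, |1 - gtr σ M x| ∂(gaussianReal 0 1)) atTop
      (𝓝 (2 * (2 * stdNormalCDF (σ / 2) - 1))) := by
  simp_rw [integral_gaussianReal_eq_integral_smul (one_ne_zero), smul_eq_mul]
  rw [← gaussian_tv σ hσ]
  have key : ∀ x, gaussianPDFReal 0 1 x * (1 + glim σ x) =
      gaussianPDFReal 0 1 x + gaussianPDFReal (-σ) 1 x := fun x => by
    rw [mul_add, pdf_mul_glim]; simp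
  refine tendsto_integral_of_dominated_convergence
    (fun x => gaussianPDFReal 0 1 x * (1 + glim σ x)) (fun M => ?_) ?_
    (fun M => ae_of_all _ fun x => ?_) (ae_of_all _ fun x => ?_)
  · have : Continuous fun x => |1 - gtr σ M x| :=
      (continuous_const.sub (gtr σ M).continuous).abs
    exact ((measurable_gaussianPDFReal _ _).mul this.measurable).aestronglyMeasurable
  · simp_rw [key]; exact (integrable_gaussianPDFReal _ _).add (integrable_gaussianPDFReal _ _)
  · rw [Real.norm_eq_abs, abs_of_nonneg (mul_nonneg (gaussianPDFReal_nonneg _ _ _) (abs_nonneg _))]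
    refine mul_le_mul_of_nonneg_left ?_ (gaussianPDFReal_nonneg _ _ _)
    have h1 := gtr_nonneg σ M x
    have h2 := gtr_le σ M x
    rw [abs_le]; constructor <;> linarith
  · refine tendsto_const_nhds.congr' ?_
    filter_upwards [gtr_eventually σ x] with M hM
    rw [hM]

/-- A diagonal argument: approximations `D M` of `T` whose error vanishes as `n → ∞` and then
`M → ∞`. -/
lemma tendsto_of_approx {T : ℕ → ℝ} {D E : ℕ → ℕ → ℝ} {d e : ℕ → ℝ} {l : ℝ}
    (h : ∀ M, ∀ᶠ n in atTop, |T n - D M n| ≤ E M n)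
    (hD : ∀ M, Tendsto (D M) atTop (𝓝 (d M))) (hE : ∀ M, Tendsto (E M) atTop (𝓝 (e M)))
    (hd : Tendsto d atTop (𝓝 l)) (he : Tendsto e atTop (𝓝 0)) : Tendsto T atTop (𝓝 l) := by
  rw [Metric.tendsto_nhds]
  intro ε hε
  obtain ⟨M, h1, h2⟩ := ((Metric.tendsto_nhds.1 hd (ε / 4) (by positivity)).and
    (Metric.tendsto_nhds.1 he (ε / 4) (by positivity))).exists
  filter_upwards [h M, Metric.tendsto_nhds.1 (hD M) (ε / 4) (by positivity),
    Metric.tendsto_nhds.1 (hE M) (ε / 4) (by positivity)] with n h3 h4 h5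
  rw [Real.dist_eq, abs_lt] at *
  rw [abs_le] at h3
  constructor <;> linarith [h1.1, h1.2, h2.1, h2.2, h3.1, h3.2, h4.1, h4.2, h5.1, h5.2]

/-- Replacing the likelihood ratio by a function `F` of the configuration changes the total
variation by at most half their `L²` distance; the latter is expanded by the change of measure
`EE_LR`. -/
lemma tv_approx {n m k : ℕ} (hn : 0 < n) (a : Fin n → ℕ) (hka : ∑ i, a i = k) (hkm : k ≤ m)
    (F : (Fin n → ℕ) → ℝ) {B : ℝ} (hB : EE n m (fun z => LR n m a z ^ 2) ≤ B) :
    |tvDist n m a - 1 / 2 * EE n m (fun z => |1 - F z|)| ≤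
      1 / 2 * Real.sqrt (B - 2 * EE n (m - k) (fun y => F (y + a)) +
        EE n m (fun z => F z ^ 2)) := by
  rw [tvDist_eq hn a (by omega), ← mul_sub, abs_mul, abs_of_pos (by norm_num : (0 : ℝ) < 1 / 2)]
  refine mul_le_mul_of_nonneg_left ?_ (by norm_num)
  have h1 : |EE n m (fun z => |1 - LR n m a z|) - EE n m (fun z => |1 - F z|)| ≤
      EE n m (fun z => |LR n m a z - F z|) := by
    rw [← EE_sub, ← Real.norm_eq_abs]
    refine (norm_EE_le n m _).trans (EE_mono fun z _ => ?_)
    rw [Real.norm_eq_abs]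
    refine (abs_abs_sub_abs_le_abs_sub _ _).trans (le_of_eq ?_)
    rw [← abs_neg]; congr 1; ring
  refine h1.trans (Real.le_sqrt_of_sq_le ((EE_abs_sq_le hn m _).trans ?_))
  have h2 := EE_LR hn a (by omega : ∑ i, a i ≤ m) F
  rw [hka] at h2
  have h3 : EE n m (fun z => (LR n m a z - F z) ^ 2) = EE n m (fun z => LR n m a z ^ 2) -
      (2 : ℝ) • EE n m (fun z => LR n m a z • F z) + EE n m (fun z => F z ^ 2) := by
    rw [← EE_smul, ← EE_sub, ← EE_add]
    refine EE_congr fun z _ => ?_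
    simp only [smul_eq_mul]; ring
  rw [h3, h2, smul_eq_mul]
  linarith

/-- In the Flat regime, `TV_A(m,n) → 2Φ(1/(2√2 c)) − 1`. -/
theorem flat_regime_tv_limit (A : (n : ℕ) → Fin n → ℕ) (m k : ℕ → ℕ)
    (hka : ∀ n, ∑ i, A n i = k n) (hkm : ∀ n, k n ≤ m n)
    (hk : Tendsto (fun n : ℕ => (k n : ℝ) / Real.sqrt n) atTop atTop)
    (c : ℝ) (hc : 0 < c) (hreg : FlatRegime A m k c) :
    Tendsto (fun n : ℕ => tvDist n (m n) (A n)) atTop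
      (𝓝 (2 * stdNormalCDF (1 / (2 * Real.sqrt 2 * c)) - 1)) := by
  set σ : ℝ := 1 / (Real.sqrt 2 * c) with hσ
  have hσ0 : 0 < σ := by positivity
  have hσ2 : σ ^ 2 = 1 / (2 * c ^ 2) := by
    rw [hσ, div_pow, mul_pow, Real.sq_sqrt (by norm_num), one_pow]
  have hσh : 1 / (2 * Real.sqrt 2 * c) = σ / 2 := by rw [hσ]; field_simp
  obtain ⟨B, hB, hBle⟩ := second_moment A m k hka hk c hc hreg
  rw [← hσ2] at hB
  have hev := (flat_facts A m k hka hk c hc hreg).1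
  have hm : ∀ᶠ n in atTop, 2 * n ≤ m n := hev.mono fun n h => h.2.2.2
  rw [hσh]
  refine tendsto_of_approx
    (D := fun M n => 1 / 2 * EE n (m n) (fun z => |1 - gtr σ M (Wst n (m n) z)|))
    (E := fun M n => 1 / 2 * Real.sqrt (B n -
      2 * EE n (m n - k n) (fun y => gtr σ M (Wst n (m n) (y + A n))) +
        EE n (m n) (fun z => gtr σ M (Wst n (m n) z) ^ 2)))
    (d := fun M => 1 / 2 * ∫ x, |1 - gtr σ M x| ∂(ProbabilityTheory.gaussianReal 0 1))
    (e := fun M => 1 / 2 * Real.sqrt (Real.exp (σ ^ 2) -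
      2 * ∫ x, gtr σ M x ∂(ProbabilityTheory.gaussianReal (-σ) 1) +
        ∫ x, gtr σ M x ^ 2 ∂(ProbabilityTheory.gaussianReal 0 1)))
    (fun M => ?_) (fun M => ?_) (fun M => ?_) ?_ ?_
  · filter_upwards [hev, hBle] with n hn hB
    exact tv_approx hn.1 (A n) (hka n) (hkm n) _ hB
  · have h := clt_standard m hm |1 - gtr σ M|
    have e : ∀ x, (|1 - gtr σ M| : BoundedContinuousFunction ℝ ℝ) x = |1 - gtr σ M x| :=
      fun x => by simp
    simp only [e] at h
    exact h.const_mul _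
  · have h := clt_standard m hm (gtr σ M ^ 2)
    have e : ∀ x, (gtr σ M ^ 2) x = gtr σ M x ^ 2 := fun x => by simp
    simp only [e] at h
    have h2 := clt_planted A m k hka hk c hc hreg (gtr σ M)
    rw [← hσ] at h2
    exact (((hB.sub (h2.const_mul 2)).add h).sqrt).const_mul _
  · have := (tendsto_gtr_abs σ hσ0).const_mul (1 / 2)
    convert this using 2
    ring
  · have := ((((tendsto_gtr_planted σ).const_mul 2).const_sub (Real.exp (σ ^ 2))).add
      (tendsto_gtr_sq σ)).sqrt.const_mul (1 / 2)
    convert this using 2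
    rw [show Real.exp (σ ^ 2) - 2 * Real.exp (σ ^ 2) + Real.exp (σ ^ 2) = 0 by ring]
    simp
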